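/- arXiv:1510.00092 — 10 statements merged into one kernel-verified Lean document; each statement's English description precedes it below -/
import Mathlib

section
/- The S₆-invariant quartic threefold X = X₆ ⊂ ℙ⁵ is rational. Concretely: let F ∈ ℂ[y₁,y₂,y₃,y₄] be the polynomial obtained from f by the substitution x₀ := 1, x₁ := y₁, x₂ := y₂, x₃ := y₃, x₄ := y₄, x₅ := −(1 + y₁ + y₂ + y₃ + y₄) (an affine chart of the hyperplane ℓ = 0). Then the ideal (F) is prime in ℂ[y₁,…,y₄], and the fraction field of the integral domain ℂ[y₁,…,y₄]/(F) is isomorphic as a ℂ-algebra to the field of rational functions in three variables, FractionRing (MvPolynomial (Fin 3) ℂ). -/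
open MvPolynomial

/-- The quartic f = 6·∑xᵢ⁴ − (∑xᵢ²)² defining the S₆-invariant quartic X = X₆. -/
noncomputable def f6 : MvPolynomial (Fin 6) ℂ :=
  6 * (∑ i : Fin 6, X i ^ 4) - (∑ i : Fin 6, X i ^ 2) ^ 2

/-- The polynomial F obtained from f by the substitution
x₀ := 1, x₁ := y₁, x₂ := y₂, x₃ := y₃, x₄ := y₄, x₅ := −(1+y₁+y₂+y₃+y₄),
cutting out an affine chart of X inside the hyperplane ∑xᵢ = 0. -/
noncomputable def Faff : MvPolynomial (Fin 4) ℂ :=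
  MvPolynomial.aeval ![1, X 0, X 1, X 2, X 3, -(1 + X 0 + X 1 + X 2 + X 3)] f6

/-!
Let `ω` be a primitive cube root of unity. In suitable linear coordinates `(h, L, M, d, e)` on the
hyperplane `∑ xᵢ = 0`, the quartic becomes
`72 (Q_ω Q_{ω²} - 8 h (h - L - M) ((L - M)² + d² + e²))` for two conjugate quadrics `Q_ω`, `Q_{ω²}`.
It is therefore swept out by the pencil of surfaces
`Q_ω = 4 μ h (h - L - M)`, `μ Q_{ω²} = 2 ((L - M)² + d² + e²)`,
which are intersections of two quadrics in `ℙ⁴`. Each of them contains a line with coefficients in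
`ℤ[ω, μ]`. A plane through this line meets each quadric in the line and a second line, so it meets
the surface in one residual point, the cross product of two linear forms. As `μ`, the plane and the
residual point are rational functions of one another, the threefold is birational to the space of
pairs `(μ, plane)`, which is rational. Irreducibility of the quartic follows from Eisenstein's
criterion.
-/

section FunctionFields

open Cardinal

universe u v

variable {k : Type u} {A K : Type v} [Field k] [CommRing A] [IsDomain A] [Field K]
  [Algebra k A] [Algebra k K]

lemma isAlgebraic_adjoin_of_adjoin_eq_top {s : Set K} (hs : IntermediateField.adjoin k s = ⊤) :
    Algebra.IsAlgebraic (Algebra.adjoin k s) K := by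
  refine ⟨fun z => ?_⟩
  have hz : z ∈ IntermediateField.adjoin k s := hs ▸ IntermediateField.mem_top
  obtain ⟨a, ha, b, hb, rfl⟩ := IntermediateField.mem_adjoin_iff_div.mp hz
  rw [div_eq_mul_inv]
  exact (isAlgebraic_algebraMap (⟨a, ha⟩ : Algebra.adjoin k s)).mul
    (isAlgebraic_algebraMap (⟨b, hb⟩ : Algebra.adjoin k s)).inv

lemma injective_of_algebraicIndependent_comp {ι : Type v} [Finite ι] {a : ι → A} (f : A →ₐ[k] K)
    (ha : AlgebraicIndependent k (f ∘ a)) (htr : Algebra.trdeg k A ≤ #ι) :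
    Function.Injective f := by
  have hbasis : IsTranscendenceBasis k a :=
    (AlgebraicIndependent.of_comp f ha).isTranscendenceBasis_of_trdeg_le_of_finite htr
  have halg := hbasis.isAlgebraic
  rw [injective_iff_map_eq_zero]
  intro z hz
  by_contra hz0
  refine Ideal.comap_ne_bot_of_algebraic_mem hz0 (I := RingHom.ker f) hz (halg.isAlgebraic z) ?_
  rw [eq_bot_iff]
  rintro ⟨c, hc⟩ hfc
  rw [Algebra.adjoin_range_eq_range_aeval] at hc
  obtain ⟨p, rfl⟩ := hc
  have hp : aeval (f ∘ a) p = 0 := (comp_aeval_apply a f p).symm.trans hfc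
  obtain rfl := (injective_iff_map_eq_zero _).mp ha p hp
  exact Subtype.ext (map_zero (aeval a))

theorem nonempty_fractionRing_algEquiv (f : A →ₐ[k] K)
    (hf : IntermediateField.adjoin k (Set.range f) = ⊤) (hfin : Algebra.trdeg k K < ℵ₀)
    (htr : Algebra.trdeg k A ≤ Algebra.trdeg k K) : Nonempty (FractionRing A ≃ₐ[k] K) := by
  have := isAlgebraic_adjoin_of_adjoin_eq_top hf
  obtain ⟨t, htf, ht⟩ := exists_isTranscendenceBasis_subset (R := k) (Set.range f)
  choose a ha using fun z : t => htf z.2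
  rw [← ht.cardinalMk_eq_trdeg] at hfin htr
  have : Finite t := lt_aleph0_iff_finite.mp hfin
  have hinj : Function.Injective f :=
    injective_of_algebraicIndependent_comp f ((funext ha : f ∘ a = Subtype.val) ▸ ht.1) htr
  let Ψ : FractionRing A →ₐ[k] K := IsFractionRing.liftAlgHom (g := f) hinj
  have hΨ : Ψ.fieldRange = ⊤ := by
    rw [eq_top_iff, ← hf, IntermediateField.adjoin_le_iff]
    rintro _ ⟨z, rfl⟩
    exact ⟨algebraMap A _ z, IsFractionRing.lift_algebraMap hinj z⟩
  exact ⟨AlgEquiv.ofBijective Ψ ⟨Ψ.injective, AlgHom.fieldRange_eq_top.mp hΨ⟩⟩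

lemma intermediateField_eq_top_of_algebraMap_mem {k A K : Type*} [Field k] [CommRing A] [Field K]
    [Algebra k A] [Algebra k K] [Algebra A K] [IsScalarTower k A K] [IsFractionRing A K] {s : Set A}
    (hs : Algebra.adjoin k s = ⊤) {E : IntermediateField k K} (hE : ∀ a ∈ s, algebraMap A K a ∈ E) :
    E = ⊤ := by
  have hA (a : A) : algebraMap A K a ∈ E := by
    have hle : Algebra.adjoin k s ≤ E.toSubalgebra.comap (IsScalarTower.toAlgHom k A K) :=
      Algebra.adjoin_le hE
    exact hle (hs ▸ Algebra.mem_top)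
  refine eq_top_iff.mpr fun z _ => ?_
  obtain ⟨a, b, -, rfl⟩ := IsFractionRing.div_surjective (A := A) z
  exact E.div_mem (hA a) (hA b)

end FunctionFields

section RationalHypersurface

open Cardinal

universe u v

variable {k : Type u} [Field k] {n : ℕ}

lemma trdeg_fractionRing_mvPolynomial (σ : Type v) :
    Algebra.trdeg k (FractionRing (MvPolynomial σ k)) = lift.{u} #σ := by
  have := IsLocalization.isAlgebraic (FractionRing (MvPolynomial σ k))
    (nonZeroDivisors (MvPolynomial σ k))
  rw [← trdeg_add_eq k (MvPolynomial σ k), MvPolynomial.trdeg_of_isDomain,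
    trdeg_eq_zero, add_zero]

lemma trdeg_quotient_mvPolynomial_le {I : Ideal (MvPolynomial (Fin (n + 1)) k)} [I.IsPrime]
    (hI : I ≠ ⊥) : Algebra.trdeg k (MvPolynomial (Fin (n + 1)) k ⧸ I) ≤ n := by
  by_contra! hlt
  let x : Fin (n + 1) → MvPolynomial (Fin (n + 1)) k ⧸ I := fun i => Ideal.Quotient.mk I (X i)
  have hx : aeval x = Ideal.Quotient.mkₐ k I := by ext; simp [x]
  have hgen : Algebra.adjoin k (Set.range x) = ⊤ := by
    rw [Algebra.adjoin_range_eq_range_aeval, hx, AlgHom.range_eq_top]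
    exact Ideal.Quotient.mkₐ_surjective k I
  have : Algebra.IsAlgebraic (Algebra.adjoin k (Set.range x)) (MvPolynomial (Fin (n + 1)) k ⧸ I) :=
    ⟨fun z => isAlgebraic_algebraMap (⟨z, hgen ▸ trivial⟩ : Algebra.adjoin k (Set.range x))⟩
  have hind : AlgebraicIndependent k x := by
    refine (Algebra.IsAlgebraic.isTranscendenceBasis_of_lift_le_trdeg_of_finite k x ?_).1
    simpa [succ_natCast] using Order.succ_le_of_lt hlt
  refine hI (eq_bot_iff.mpr fun p hp => ?_)
  refine (injective_iff_map_eq_zero _).mp hind p ?_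
  rw [hx]
  exact Ideal.Quotient.eq_zero_iff_mem.mpr hp

theorem nonempty_fractionRing_quotient_algEquiv {I : Ideal (MvPolynomial (Fin (n + 1)) k)}
    [I.IsPrime] (hI : I ≠ ⊥) {K : Type u} [Field K] [Algebra k K] {y : Fin (n + 1) → K}
    (hy : ∀ p ∈ I, aeval y p = 0) (hgen : IntermediateField.adjoin k (Set.range y) = ⊤)
    (htr : Algebra.trdeg k K = n) :
    Nonempty (FractionRing (MvPolynomial (Fin (n + 1)) k ⧸ I) ≃ₐ[k] K) := by
  refine nonempty_fractionRing_algEquiv (Ideal.Quotient.liftₐ I (aeval y) hy) ?_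
    (htr ▸ natCast_lt_aleph0) (htr ▸ trdeg_quotient_mvPolynomial_le hI)
  rw [eq_top_iff, ← hgen]
  refine IntermediateField.adjoin.mono _ _ _ (Set.range_subset_iff.mpr fun i => ?_)
  exact ⟨Ideal.Quotient.mk I (X i), aeval_X y i⟩

end RationalHypersurface

/-- The `S₆`-invariant quartic form `6 ∑ xᵢ⁴ - (∑ xᵢ²)²` over an arbitrary coefficient ring. -/
noncomputable def sixQuartic (k : Type*) [CommRing k] : MvPolynomial (Fin 6) k :=
  6 * (∑ i, X i ^ 4) - (∑ i, X i ^ 2) ^ 2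

/-- The equation of the threefold `X₆` in the chart `x₀ = 1` of the hyperplane `∑ xᵢ = 0`, with
affine coordinates `x₁, …, x₄`. -/
noncomputable def chartQuartic (k : Type*) [CommRing k] : MvPolynomial (Fin 4) k :=
  aeval ![1, X 0, X 1, X 2, X 3, -(1 + X 0 + X 1 + X 2 + X 3)] (sixQuartic k)

section Irreducibility

lemma eval_pderiv_eq_zero_of_mem_ker_eval_sq {σ R : Type*} [CommRing R] {a : σ → R}
    {p : MvPolynomial σ R} (hp : p ∈ RingHom.ker (eval a) ^ 2) (i : σ) :
    eval a (pderiv i p) = 0 := by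
  rw [pow_two] at hp
  induction hp using Submodule.mul_induction_on' with
  | mem_mul_mem p hp q hq => simp [Derivation.leibniz, RingHom.mem_ker.mp hp, RingHom.mem_ker.mp hq]
  | add p _ q _ hp hq => rw [map_add, map_add, hp, hq, add_zero]

lemma irreducible_quartic_of_eisenstein {R : Type*} [CommRing R] [IsDomain R] {P : Ideal R}
    (hP : P.IsPrime) {a b c d e : R} (ha : IsUnit a) (hb : b ∈ P) (hc : c ∈ P) (hd : d ∈ P)
    (he : e ∈ P) (he' : e ∉ P ^ 2) :
    Irreducible (.C a * .X ^ 4 + .C b * .X ^ 3 + .C c * .X ^ 2 + .C d * .X + .C e :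
      Polynomial R) := by
  set p : Polynomial R := .C a * .X ^ 4 + .C b * .X ^ 3 + .C c * .X ^ 2 + .C d * .X + .C e with hp
  have hdeg : p.degree = 4 := by
    rw [hp]
    compute_degree!
    exact ha.ne_zero
  have hlead : p.leadingCoeff = a := by
    rw [Polynomial.leadingCoeff, Polynomial.natDegree_eq_of_degree_eq_some hdeg, hp]
    simp
  refine Polynomial.irreducible_of_eisenstein_criterion hP ?_ (fun n hn => ?_) ?_ ?_ ?_
  · exact hlead ▸ fun haP => hP.ne_top (P.eq_top_of_isUnit_mem haP ha)
  · rw [hdeg] at hn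
    have hn4 : n < 4 := by exact_mod_cast hn
    interval_cases n <;> simpa [hp, Polynomial.coeff_X]
  · rw [hdeg]
    norm_num
  · simpa [hp] using he'
  · rw [Polynomial.isPrimitive_iff_isUnit_of_C_dvd]
    intro r hr
    exact isUnit_of_dvd_unit (hlead ▸ (Polynomial.C_dvd_iff_dvd_coeff _ _).mp hr p.natDegree) ha

/-- The power sum `x₀ⁿ + x₂ⁿ + x₃ⁿ + x₄ⁿ` in the chart `x₀ = 1`; the coordinate `x₁`, in which the
quartic is expanded for Eisenstein's criterion, and `x₅` are left out. -/
noncomputable def chartPowerSum (k : Type*) [CommRing k] (n : ℕ) : MvPolynomial (Fin 3) k :=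
  1 + X 0 ^ n + X 1 ^ n + X 2 ^ n

/-- The constant term of the quartic of the chart as a polynomial in `x₁`. -/
noncomputable def chartConstantTerm (k : Type*) [CommRing k] : MvPolynomial (Fin 3) k :=
  6 * (chartPowerSum k 4 + chartPowerSum k 1 ^ 4) - (chartPowerSum k 2 + chartPowerSum k 1 ^ 2) ^ 2

lemma finSuccEquiv_chartQuartic {k : Type*} [CommRing k] : finSuccEquiv k 3 (chartQuartic k) =
    .C 8 * .X ^ 4 + .C (16 * chartPowerSum k 1) * .X ^ 3 +
      .C (28 * chartPowerSum k 1 ^ 2 - 4 * chartPowerSum k 2) * .X ^ 2 +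
      .C (20 * chartPowerSum k 1 ^ 3 - 4 * chartPowerSum k 1 * chartPowerSum k 2) * .X +
      .C (chartConstantTerm k) := by
  have h0 : finSuccEquiv k 3 (X 0) = .X := finSuccEquiv_X_zero
  have h1 : finSuccEquiv k 3 (X 1) = .C (X 0) := finSuccEquiv_X_succ (j := 0)
  have h2 : finSuccEquiv k 3 (X 2) = .C (X 1) := finSuccEquiv_X_succ (j := 1)
  have h3 : finSuccEquiv k 3 (X 3) = .C (X 2) := finSuccEquiv_X_succ (j := 2)
  simp only [chartQuartic, sixQuartic, chartConstantTerm, chartPowerSum, Fin.sum_univ_six, map_add,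
    map_sub, map_mul, map_pow, map_neg, map_one, aeval_X, Matrix.cons_val,
    h0, h1, h2, h3, map_ofNat]
  generalize (.X : Polynomial (MvPolynomial (Fin 3) k)) = x
  generalize (.C (X 0) : Polynomial (MvPolynomial (Fin 3) k)) = a
  generalize (.C (X 1) : Polynomial (MvPolynomial (Fin 3) k)) = b
  generalize (.C (X 2) : Polynomial (MvPolynomial (Fin 3) k)) = c
  ring

-- The values `1, ω, ω², 0` entering the power sums are the roots of `T⁴ - T`.
lemma eval_chartPowerSum {k : Type*} [CommRing k] {ω : k} (hω : ω ^ 2 + ω + 1 = 0) :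
    eval ![ω, ω ^ 2, 0] (chartPowerSum k 1) = 0 ∧ eval ![ω, ω ^ 2, 0] (chartPowerSum k 2) = 0 ∧
      eval ![ω, ω ^ 2, 0] (chartPowerSum k 4) = 0 := by
  simp only [chartPowerSum, map_add, map_one, map_pow, eval_X, Matrix.cons_val]
  grind

lemma chartConstantTerm_notMem_ker_eval_sq {k : Type*} [CommRing k] [IsDomain k] {ω : k}
    (hω : ω ^ 2 + ω + 1 = 0) (h2 : (2 : k) ≠ 0) (h3 : (3 : k) ≠ 0) :
    chartConstantTerm k ∉ RingHom.ker (eval ![ω, ω ^ 2, 0]) ^ 2 := by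
  intro hmem
  obtain ⟨hp₁, hp₂, -⟩ := eval_chartPowerSum hω
  have hconst : pderiv (0 : Fin 3) (6 : MvPolynomial (Fin 3) k) = 0 := Derivation.map_natCast _ 6
  have hp₄ : eval ![ω, ω ^ 2, 0] (pderiv 0 (chartPowerSum k 4)) = 4 * ω ^ 3 := by
    simp [chartPowerSum, pderiv_X]
  have h24 : 6 * (4 * ω ^ 3) = 0 := by
    rw [← eval_pderiv_eq_zero_of_mem_ker_eval_sq hmem 0]
    simp [chartConstantTerm, Derivation.leibniz, Derivation.leibniz_pow, hconst, hp₁, hp₂, hp₄]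
  have : (2 : k) ^ 3 * 3 ≠ 0 := mul_ne_zero (pow_ne_zero 3 h2) h3
  grind

theorem irreducible_chartQuartic {k : Type*} [Field k] {ω : k} (hω : ω ^ 2 + ω + 1 = 0)
    (h2 : (2 : k) ≠ 0) (h3 : (3 : k) ≠ 0) : Irreducible (chartQuartic k) := by
  obtain ⟨hp₁, hp₂, hp₄⟩ := eval_chartPowerSum hω
  have h8 : (8 : k) = 2 ^ 3 := by norm_num
  rw [← MulEquiv.irreducible_iff (finSuccEquiv k 3), finSuccEquiv_chartQuartic]
  apply irreducible_quartic_of_eisenstein (RingHom.ker_isPrime (eval ![ω, ω ^ 2, 0]))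
  · rw [← map_ofNat C, h8]
    exact (pow_ne_zero 3 h2).isUnit.map C
  case he' => exact chartConstantTerm_notMem_ker_eval_sq hω h2 h3
  all_goals simp [RingHom.mem_ker, chartConstantTerm, hp₁, hp₂, hp₄]

end Irreducibility

section Chart

lemma aeval_chartQuartic {k A : Type*} [CommRing k] [CommRing A] [Algebra k A] {x : Fin 6 → A}
    (hx : x 0 = 1) (hsum : ∑ i, x i = 0) :
    aeval (fun i : Fin 4 => x i.succ.castSucc) (chartQuartic k) =
      6 * ∑ i, x i ^ 4 - (∑ i, x i ^ 2) ^ 2 := by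
  rw [Fin.sum_univ_six, hx] at hsum
  have hpoint : (fun i => aeval (fun j : Fin 4 => x j.succ.castSucc)
      ((![1, X 0, X 1, X 2, X 3, -(1 + X 0 + X 1 + X 2 + X 3)] : Fin 6 → MvPolynomial (Fin 4) k)
        i)) = x := by
    ext i
    revert i
    refine Fin.lastCases ?_ fun i => ?_
    · simpa using (eq_neg_of_add_eq_zero_right hsum).symm
    · fin_cases i <;> simp [hx]
  rw [chartQuartic, comp_aeval_apply, hpoint]
  simp only [sixQuartic, map_sub, map_mul, map_sum, map_pow, aeval_X, map_ofNat]

lemma mem_of_chart_mem {A S : Type*} [CommRing A] [SetLike S A] [SubringClass S A] {E : S}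
    {x : Fin 6 → A} (hx : x 0 = 1) (hsum : ∑ i, x i = 0) (hE : ∀ i : Fin 4, x i.succ.castSucc ∈ E)
    (i : Fin 6) : x i ∈ E := by
  have hmem : ∀ i : Fin 5, x i.castSucc ∈ E := Fin.cases (by simp [hx, one_mem]) hE
  refine Fin.lastCases ?_ hmem i
  rw [Fin.sum_univ_castSucc] at hsum
  exact eq_neg_of_add_eq_zero_right hsum ▸ neg_mem (sum_mem fun i _ => hmem i)

end Chart

/-- A point of the hyperplane `∑ xᵢ = 0`, in the linear coordinates of `AdaptedPoint.toSix`, which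
are adapted to writing the quartic as a quadratic expression in quadrics. -/
structure AdaptedPoint (R : Type*) where
  h : R
  L : R
  M : R
  d : R
  e : R

namespace AdaptedPoint

section Quartic

variable {R : Type*} [CommRing R]

/-- The six coordinates `xᵢ` of a point. The factor `ω² - ω` is a square root of `-3`, which makes
the quadrics of the pencil diagonal over `ℤ[ω]` up to the terms in `h`. -/
def toSix (ω : R) (p : AdaptedPoint R) : Fin 6 → R :=
  ![2 * (p.h + p.L), 2 * p.h - p.L + (ω ^ 2 - ω) * p.d, 2 * p.h - p.L - (ω ^ 2 - ω) * p.d,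
    -2 * (p.h + p.M), -2 * p.h + p.M - (ω ^ 2 - ω) * p.e, -2 * p.h + p.M + (ω ^ 2 - ω) * p.e]

/-- The quadric `Q_ω`; its conjugate is `Q_{ω²}`. -/
def quadric (ω : R) (p : AdaptedPoint R) : R :=
  p.L ^ 2 - p.d ^ 2 + ω * (p.M ^ 2 - p.e ^ 2) + 4 * p.h * (ω * p.L + p.M)

/-- The equation of the union of the hyperplanes `h = 0` and `h = L + M`. -/
def hyperplanePair (p : AdaptedPoint R) : R := p.h * (p.h - p.L - p.M)

/-- The equation of the quadric cone `(L - M)² + d² + e² = 0`. -/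
def coneQuadric (p : AdaptedPoint R) : R := (p.L - p.M) ^ 2 + p.d ^ 2 + p.e ^ 2

/-- Membership in the intersection of two quadrics with parameter `μ`, in the pencil sweeping out
the quartic. -/
def MemPencil (ω μ : R) (p : AdaptedPoint R) : Prop :=
  p.quadric ω = 4 * μ * p.hyperplanePair ∧ μ * p.quadric (ω ^ 2) = 2 * p.coneQuadric

lemma sum_toSix (ω : R) (p : AdaptedPoint R) : ∑ i, p.toSix ω i = 0 := by
  simp only [Fin.sum_univ_six, toSix, Matrix.cons_val]
  ring

lemma quartic_toSix {ω : R} (hω : ω ^ 2 + ω + 1 = 0) (p : AdaptedPoint R) :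
    6 * ∑ i, p.toSix ω i ^ 4 - (∑ i, p.toSix ω i ^ 2) ^ 2 =
      72 * (p.quadric ω * p.quadric (ω ^ 2) - 8 * p.hyperplanePair * p.coneQuadric) := by
  simp only [Fin.sum_univ_six, toSix, quadric, hyperplanePair, coneQuadric, Matrix.cons_val]
  generalize p.h = h, p.L = L, p.M = M, p.d = d, p.e = e
  grind

lemma MemPencil.quartic_toSix_eq_zero {ω μ : R} (hω : ω ^ 2 + ω + 1 = 0) {p : AdaptedPoint R}
    (hp : p.MemPencil ω μ) : 6 * ∑ i, p.toSix ω i ^ 4 - (∑ i, p.toSix ω i ^ 2) ^ 2 = 0 := by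
  rw [quartic_toSix hω]
  linear_combination 72 * p.quadric (ω ^ 2) * hp.1 + 288 * p.hyperplanePair * hp.2

end Quartic

lemma mem_of_toSix_mem {F S : Type*} [Field F] [SetLike S F] [SubfieldClass S F] {E : S} {ω : F}
    (hω : ω ^ 2 + ω + 1 = 0) (h2 : (2 : F) ≠ 0) (h3 : (3 : F) ≠ 0) (hωE : ω ∈ E)
    {p : AdaptedPoint F} (hp : ∀ i, p.toSix ω i ∈ E) :
    p.h ∈ E ∧ p.L ∈ E ∧ p.M ∈ E ∧ p.d ∈ E ∧ p.e ∈ E := by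
  have h2E : (2 : F) ∈ E := ofNat_mem E 2
  have h6E : (2 * 3 : F) ∈ E := mul_mem h2E (ofNat_mem E 3)
  have h6 : (2 * 3 : F) ≠ 0 := mul_ne_zero h2 h3
  have hθE : 2 * (ω ^ 2 - ω) ∈ E := mul_mem h2E (sub_mem (pow_mem hωE 2) hωE)
  have hθ : 2 * (ω ^ 2 - ω) ≠ 0 := mul_ne_zero h2 fun hθ => h3 (by grind)
  have mem_of_eq_div {a b c : F} (hb : b ∈ E) (hc : c ∈ E) (hab : a = b / c) : a ∈ E :=
    hab ▸ div_mem hb hc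
  refine ⟨mem_of_eq_div (add_mem (add_mem (hp 0) (hp 1)) (hp 2)) h6E ?_,
    mem_of_eq_div (sub_mem (sub_mem (mul_mem h2E (hp 0)) (hp 1)) (hp 2)) h6E ?_,
    mem_of_eq_div (sub_mem (add_mem (hp 4) (hp 5)) (mul_mem h2E (hp 3))) h6E ?_,
    mem_of_eq_div (sub_mem (hp 1) (hp 2)) hθE ?_, mem_of_eq_div (sub_mem (hp 5) (hp 4)) hθE ?_⟩
  all_goals
    rw [eq_div_iff (by assumption)]
    simp only [toSix, Matrix.cons_val]
    ring

section PlaneThroughLine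

open scoped Matrix

variable {R : Type*} [CommRing R]

/-- The surface `MemPencil ω μ` contains the line `L = -ω² M - μ(μ - ω²) h`,
`d = ω² M + μ(μ + ω - 1) h`, `e = M + 2ω² μ h`. This is the point with coordinates `v` of the plane
spanned by the line, on which `v 0 = h`, `v 1 = M` and `v 2 = 0`, and by the point with
`(h, L, M, d, e) = (0, 1, 0, t, u)`. -/
def planePoint (ω μ t u : R) (v : Fin 3 → R) : AdaptedPoint R where
  h := v 0
  L := v 2 - ω ^ 2 * v 1 - μ * (μ - ω ^ 2) * v 0
  M := v 1
  d := t * v 2 + ω ^ 2 * v 1 + μ * (μ + ω - 1) * v 0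
  e := u * v 2 + v 1 + 2 * ω ^ 2 * μ * v 0

/-- The coordinate `v 2` of `planePoint`, as a linear form vanishing on the line. -/
def lineForm (ω μ : R) (p : AdaptedPoint R) : R := p.L + ω ^ 2 * p.M + μ * (μ - ω ^ 2) * p.h

/-- The line in which the plane meets the quadric `Q_ω = 4 μ h (h - L - M)` residually. -/
def firstResidualLine (ω μ t u : R) : Fin 3 → R :=
  ![2 * t * (μ * (μ + ω - 1)) + 4 * μ * u + 2 * (μ * (μ - ω ^ 2)) - 4 * ω - 4 * μ,
    2 * ω ^ 2 * t + 2 * ω * u + 2 * ω ^ 2,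
    t ^ 2 + ω * u ^ 2 - 1]

/-- The line in which the plane meets the quadric `μ Q_{ω²} = 2((L - M)² + d² + e²)` residually. -/
def secondResidualLine (ω μ t u : R) : Fin 3 → R :=
  ![2 * (μ + 2) * t * (μ * (μ + ω - 1)) + 4 * ω ^ 2 * μ * (ω ^ 2 * μ + 2) * u
      + 2 * (μ - 2) * (μ * (μ - ω ^ 2)) - 4 * μ * ω ^ 2,
    2 * (μ + 2) * ω ^ 2 * t + 2 * (ω ^ 2 * μ + 2) * u + 2 * (μ - 2) * ω ^ 2 - 4,
    (μ + 2) * t ^ 2 + (ω ^ 2 * μ + 2) * u ^ 2 - μ + 2]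

/-- The intersection of the two residual lines, in the coordinates of the plane. -/
def residualVector (ω μ t u : R) : Fin 3 → R :=
  firstResidualLine ω μ t u ⨯₃ secondResidualLine ω μ t u

/-- The product of the linear forms in the residual point that have to be invertible in order to
put it into the chart `x₀ = 1` and to recover `μ`, `t` and `u` from it. -/
def residualDenominator (ω μ t u : R) : R :=
  let p := planePoint ω μ t u (residualVector ω μ t u)
  residualVector ω μ t u 2 * p.hyperplanePair * (p.h + p.L)

lemma lineForm_planePoint (ω μ t u : R) (v : Fin 3 → R) :
    (planePoint ω μ t u v).lineForm ω μ = v 2 := by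
  simp only [lineForm, planePoint]
  ring

lemma quadric_planePoint {ω : R} (hω : ω ^ 2 + ω + 1 = 0) (μ t u : R) (v : Fin 3 → R) :
    4 * μ * (planePoint ω μ t u v).hyperplanePair - (planePoint ω μ t u v).quadric ω =
      v 2 * (firstResidualLine ω μ t u ⬝ᵥ v) := by
  simp only [planePoint, quadric, hyperplanePair, firstResidualLine, dotProduct,
    Fin.sum_univ_three, Matrix.cons_val]
  grind

lemma coneQuadric_planePoint {ω : R} (hω : ω ^ 2 + ω + 1 = 0) (μ t u : R) (v : Fin 3 → R) :
    2 * (planePoint ω μ t u v).coneQuadric - μ * (planePoint ω μ t u v).quadric (ω ^ 2) =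
      v 2 * (secondResidualLine ω μ t u ⬝ᵥ v) := by
  simp only [planePoint, quadric, coneQuadric, secondResidualLine, dotProduct,
    Fin.sum_univ_three, Matrix.cons_val]
  grind

lemma memPencil_planePoint_smul_residualVector {ω : R} (hω : ω ^ 2 + ω + 1 = 0) (c μ t u : R) :
    (planePoint ω μ t u (c • residualVector ω μ t u)).MemPencil ω μ := by
  constructor <;> rw [eq_comm, ← sub_eq_zero]
  · rw [quadric_planePoint hω, dotProduct_smul, residualVector, dot_self_cross, smul_zero, mul_zero]
  · rw [coneQuadric_planePoint hω, dotProduct_smul, residualVector, dot_cross_self, smul_zero,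
      mul_zero]

lemma map_residualDenominator {S : Type*} [CommRing S] (g : R →+* S) (ω μ t u : R) :
    g (residualDenominator ω μ t u) = residualDenominator (g ω) (g μ) (g t) (g u) := by
  simp [residualDenominator, residualVector, planePoint, hyperplanePair, firstResidualLine,
    secondResidualLine, cross_apply, map_ofNat]

lemma residualDenominator_zero_zero_one {ω : R} (hω : ω ^ 2 + ω + 1 = 0) :
    residualDenominator ω 0 0 1 = -(2 ^ 10 * 3) := by
  simp only [residualDenominator, residualVector, planePoint, hyperplanePair, firstResidualLine,
    secondResidualLine, cross_apply, Matrix.cons_val]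
  grind

lemma residualDenominator_X_ne_zero {k : Type*} [CommRing k] [IsDomain k] {ω : k}
    (hω : ω ^ 2 + ω + 1 = 0) (h2 : (2 : k) ≠ 0) (h3 : (3 : k) ≠ 0) :
    residualDenominator (C ω) (X 0) (X 1) (X 2) ≠ (0 : MvPolynomial (Fin 3) k) := by
  intro h
  have heval := map_residualDenominator (eval ![(0 : k), 0, 1]) (C ω) (X 0) (X 1) (X 2)
  simp only [h, map_zero, eval_C, eval_X, Matrix.cons_val, residualDenominator_zero_zero_one hω,
    zero_eq_neg] at heval
  exact mul_ne_zero (pow_ne_zero 10 h2) h3 heval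

end PlaneThroughLine

section ResidualPoint

variable {K : Type*} [Field K] {ω μ t u : K}

/-- The residual point of intersection of a plane through the line with the surface
`MemPencil ω μ`, normalised to lie in the chart `x₀ = 1` if `residualDenominator` does not
vanish. -/
def residualPoint (ω μ t u : K) : AdaptedPoint K :=
  let p := planePoint ω μ t u (residualVector ω μ t u)
  planePoint ω μ t u ((2 * (p.h + p.L))⁻¹ • residualVector ω μ t u)

lemma memPencil_residualPoint (hω : ω ^ 2 + ω + 1 = 0) (μ t u : K) :
    (residualPoint ω μ t u).MemPencil ω μ :=
  memPencil_planePoint_smul_residualVector hω _ μ t u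

lemma toSix_residualPoint_zero (h2 : (2 : K) ≠ 0) (hden : residualDenominator ω μ t u ≠ 0) :
    (residualPoint ω μ t u).toSix ω 0 = 1 := by
  have hhL := mul_ne_zero h2 (right_ne_zero_of_mul hden)
  rw [← inv_mul_cancel₀ hhL]
  simp only [toSix, residualPoint, planePoint, Pi.smul_apply, smul_eq_mul, Matrix.cons_val]
  ring

lemma hyperplanePair_residualPoint_ne_zero (h2 : (2 : K) ≠ 0)
    (hden : residualDenominator ω μ t u ≠ 0) : (residualPoint ω μ t u).hyperplanePair ≠ 0 := by
  have hhL := mul_ne_zero h2 (right_ne_zero_of_mul hden)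
  have hpair := right_ne_zero_of_mul (left_ne_zero_of_mul hden)
  convert mul_ne_zero (pow_ne_zero 2 (inv_ne_zero hhL)) hpair using 1
  simp only [residualPoint, planePoint, hyperplanePair, Pi.smul_apply, smul_eq_mul]
  ring

lemma lineForm_residualPoint_ne_zero (h2 : (2 : K) ≠ 0) (hden : residualDenominator ω μ t u ≠ 0) :
    (residualPoint ω μ t u).lineForm ω μ ≠ 0 := by
  rw [residualPoint, lineForm_planePoint]
  exact mul_ne_zero (inv_ne_zero (mul_ne_zero h2 (right_ne_zero_of_mul hden)))
    (left_ne_zero_of_mul (left_ne_zero_of_mul hden))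

section Membership

variable {S : Type*} [SetLike S K] [SubfieldClass S K] {E : S} {p : AdaptedPoint K}

lemma MemPencil.parameter_mem (hp : p.MemPencil ω μ) (h2 : (2 : K) ≠ 0)
    (hpair : p.hyperplanePair ≠ 0) (hωE : ω ∈ E)
    (hpE : p.h ∈ E ∧ p.L ∈ E ∧ p.M ∈ E ∧ p.d ∈ E ∧ p.e ∈ E) : μ ∈ E := by
  obtain ⟨hh, hL, hM, hd, he⟩ := hpE
  have hμ : μ = p.quadric ω / (2 ^ 2 * p.hyperplanePair) := by
    rw [eq_div_iff (mul_ne_zero (pow_ne_zero 2 h2) hpair), hp.1]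
    ring
  have hquadE : p.quadric ω ∈ E :=
    add_mem (add_mem (sub_mem (pow_mem hL 2) (pow_mem hd 2))
      (mul_mem hωE (sub_mem (pow_mem hM 2) (pow_mem he 2))))
      (mul_mem (mul_mem (ofNat_mem E 4) hh) (add_mem (mul_mem hωE hL) hM))
  exact hμ ▸ div_mem hquadE (mul_mem (pow_mem (ofNat_mem E 2) 2)
    (mul_mem hh (sub_mem (sub_mem hh hL) hM)))

lemma slopes_mem_of_planePoint_mem {v : Fin 3 → K} (hp : p = planePoint ω μ t u v)
    (hline : p.lineForm ω μ ≠ 0) (hωE : ω ∈ E) (hμE : μ ∈ E)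
    (hpE : p.h ∈ E ∧ p.L ∈ E ∧ p.M ∈ E ∧ p.d ∈ E ∧ p.e ∈ E) : t ∈ E ∧ u ∈ E := by
  obtain ⟨hh, hL, hM, hd, he⟩ := hpE
  have hω2 : ω ^ 2 ∈ E := pow_mem hωE 2
  have hlineE : p.lineForm ω μ ∈ E :=
    add_mem (add_mem hL (mul_mem hω2 hM)) (mul_mem (mul_mem hμE (sub_mem hμE hω2)) hh)
  have ht : t = (p.d - ω ^ 2 * p.M - μ * (μ + ω - 1) * p.h) / p.lineForm ω μ := by
    rw [eq_div_iff hline, hp, lineForm_planePoint]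
    simp only [planePoint]
    ring
  have hu : u = (p.e - p.M - 2 * ω ^ 2 * μ * p.h) / p.lineForm ω μ := by
    rw [eq_div_iff hline, hp, lineForm_planePoint]
    simp only [planePoint]
    ring
  have htE : μ * (μ + ω - 1) ∈ E := mul_mem hμE (sub_mem (add_mem hμE hωE) (one_mem E))
  have huE : 2 * ω ^ 2 * μ ∈ E := mul_mem (mul_mem (ofNat_mem E 2) hω2) hμE
  exact ⟨ht ▸ div_mem (sub_mem (sub_mem hd (mul_mem hω2 hM)) (mul_mem htE hh)) hlineE,
    hu ▸ div_mem (sub_mem (sub_mem he hM) (mul_mem huE hh)) hlineE⟩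

end Membership

end ResidualPoint

end AdaptedPoint

section Rationality

open AdaptedPoint

theorem exists_chart_point_of_residualDenominator_ne_zero {k K : Type*} [Field k] [Field K]
    [Algebra k K] {ω : k} {μ t u : K} (hω : ω ^ 2 + ω + 1 = 0) (h2 : (2 : k) ≠ 0)
    (h3 : (3 : k) ≠ 0) (hden : residualDenominator (algebraMap k K ω) μ t u ≠ 0) :
    ∃ y : Fin 4 → K, aeval y (chartQuartic k) = 0 ∧
      μ ∈ IntermediateField.adjoin k (Set.range y) ∧
      t ∈ IntermediateField.adjoin k (Set.range y) ∧
      u ∈ IntermediateField.adjoin k (Set.range y) := by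
  have hωK : algebraMap k K ω ^ 2 + algebraMap k K ω + 1 = 0 := by
    simpa using congrArg (algebraMap k K) hω
  have h2K : (2 : K) ≠ 0 := by simpa [map_ofNat] using (map_ne_zero (algebraMap k K)).mpr h2
  have h3K : (3 : K) ≠ 0 := by simpa [map_ofNat] using (map_ne_zero (algebraMap k K)).mpr h3
  set p := residualPoint (algebraMap k K ω) μ t u with hp
  set x := p.toSix (algebraMap k K ω)
  have hmem : p.MemPencil (algebraMap k K ω) μ := memPencil_residualPoint hωK μ t u
  have hx0 : x 0 = 1 := toSix_residualPoint_zero h2K hden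
  refine ⟨fun i => x i.succ.castSucc, ?_, ?_⟩
  · rw [aeval_chartQuartic hx0 (p.sum_toSix _), hmem.quartic_toSix_eq_zero hωK]
  set E := IntermediateField.adjoin k (Set.range fun i : Fin 4 => x i.succ.castSucc)
  have hωE : algebraMap k K ω ∈ E := E.algebraMap_mem ω
  have hy (i : Fin 4) : x i.succ.castSucc ∈ E := IntermediateField.subset_adjoin k _ ⟨i, rfl⟩
  have hpE := mem_of_toSix_mem hωK h2K h3K hωE (mem_of_chart_mem hx0 (p.sum_toSix _) hy)
  have hμE : μ ∈ E :=
    hmem.parameter_mem h2K (hyperplanePair_residualPoint_ne_zero h2K hden) hωE hpE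
  exact ⟨hμE, slopes_mem_of_planePoint_mem hp (lineForm_residualPoint_ne_zero h2K hden) hωE hμE hpE⟩

variable {k : Type*} [Field k] {ω : k}

theorem exists_generic_chart_point (hω : ω ^ 2 + ω + 1 = 0) (h2 : (2 : k) ≠ 0) (h3 : (3 : k) ≠ 0) :
    ∃ y : Fin 4 → FractionRing (MvPolynomial (Fin 3) k),
      aeval y (chartQuartic k) = 0 ∧ IntermediateField.adjoin k (Set.range y) = ⊤ := by
  let φ := algebraMap (MvPolynomial (Fin 3) k) (FractionRing (MvPolynomial (Fin 3) k))
  have hden : residualDenominator (algebraMap k _ ω) (φ (X 0)) (φ (X 1)) (φ (X 2)) ≠ 0 := by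
    rw [IsScalarTower.algebraMap_apply k (MvPolynomial (Fin 3) k), ← map_residualDenominator]
    exact (map_ne_zero_iff φ (IsFractionRing.injective _ _)).mpr
      (residualDenominator_X_ne_zero hω h2 h3)
  obtain ⟨y, hy, hμ, ht, hu⟩ := exists_chart_point_of_residualDenominator_ne_zero hω h2 h3 hden
  refine ⟨y, hy, intermediateField_eq_top_of_algebraMap_mem (adjoin_range_X (σ := Fin 3)) ?_⟩
  rintro _ ⟨i, rfl⟩
  fin_cases i
  exacts [hμ, ht, hu]

theorem X6_is_rational_general (hω : ω ^ 2 + ω + 1 = 0) (h2 : (2 : k) ≠ 0) (h3 : (3 : k) ≠ 0) :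
    (Ideal.span {chartQuartic k}).IsPrime ∧
    Nonempty (FractionRing (MvPolynomial (Fin 4) k ⧸ Ideal.span {chartQuartic k}) ≃ₐ[k]
      FractionRing (MvPolynomial (Fin 3) k)) := by
  have hirr := irreducible_chartQuartic hω h2 h3
  have hprime : (Ideal.span {chartQuartic k}).IsPrime :=
    (Ideal.span_singleton_prime hirr.ne_zero).mpr hirr.prime
  obtain ⟨y, hy, hgen⟩ := exists_generic_chart_point hω h2 h3
  refine ⟨hprime, nonempty_fractionRing_quotient_algEquiv ?_ (fun p hp => ?_) hgen ?_⟩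
  · simpa using hirr.ne_zero
  · obtain ⟨q, rfl⟩ := Ideal.mem_span_singleton.mp hp
    rw [map_mul, hy, zero_mul]
  · simp [trdeg_fractionRing_mvPolynomial]

end Rationality

/-- X₆ is rational: the ideal (F) is prime, and the fraction field of
ℂ[y₁,…,y₄]/(F) is isomorphic, as a ℂ-algebra, to the field of rational
functions in three variables. -/
theorem X6_is_rational :
    (Ideal.span {Faff}).IsPrime ∧
    Nonempty ((FractionRing (MvPolynomial (Fin 4) ℂ ⧸ Ideal.span {Faff})) ≃ₐ[ℂ]
      FractionRing (MvPolynomial (Fin 3) ℂ)) := by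
  obtain ⟨ω, hω⟩ : ∃ ω : ℂ, ω ^ 2 + ω + 1 = 0 := by
    have h := (Complex.isPrimitiveRoot_exp 3 three_ne_zero).geom_sum_eq_zero (by norm_num)
    exact ⟨_, by simpa [Finset.sum_range_succ, add_comm, add_assoc] using h⟩
  exact X6_is_rational_general hω two_ne_zero three_ne_zero
end

section
/- Substituting x₄ := −(x₁+x₃) and x₅ := −(x₀+x₂) into f yields the polynomial identity f(x₀, x₁, x₂, x₃, −(x₁+x₃), −(x₀+x₂)) = 8·q₁·q₂ in ℂ[x₀,x₁,x₂,x₃]. (In other words, the intersection of X with the projective subspace ℙ³ = {x₀+x₂+x₅ = x₁+x₃+x₄ = 0} is the union of the two quadric surfaces Q₁ + Q₂.) -/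
open MvPolynomial

/-- The quadric q₁ = x₀²+x₀x₂+x₂² + w·(x₁²+x₁x₃+x₃²) in ℂ[x₀,x₁,x₂,x₃]. -/
noncomputable def q1 (w : ℂ) : MvPolynomial (Fin 4) ℂ :=
  X 0 ^ 2 + X 0 * X 2 + X 2 ^ 2 + C w * (X 1 ^ 2 + X 1 * X 3 + X 3 ^ 2)

/-- The quadric q₂ = x₀²+x₀x₂+x₂² − (w+1)·(x₁²+x₁x₃+x₃²) in ℂ[x₀,x₁,x₂,x₃]. -/
noncomputable def q2 (w : ℂ) : MvPolynomial (Fin 4) ℂ :=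
  X 0 ^ 2 + X 0 * X 2 + X 2 ^ 2 - C (w + 1) * (X 1 ^ 2 + X 1 * X 3 + X 3 ^ 2)

/-! For a zero-sum triple `(a, b, c)`, the sums of squares and of fourth powers both depend only on
the quadratic form `N(a, b) = a² + ab + b²`: they equal `2N` and `2N²`. On the given `ℙ³` the six
coordinates split into two zero-sum triples, with forms `A` and `B`, so `f` becomes
`6(2A² + 2B²) - (2A + 2B)² = 8(A² - AB + B²) = 8N(A, -B)`. Since `N` is a norm form of `ℤ[w]`, it
factors linearly: `N(A, -B) = (A + wB)(A + w²B)`, with `w² = -(w + 1)`. -/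

section CommRing

variable {R : Type*} [CommRing R]

/-- The quadratic form `a² + ab + b²`, the norm of `a - wb` from the Eisenstein integers `ℤ[w]`.
It expresses the power sums of the zero-sum triple `(a, b, -(a + b))`. -/
def eisensteinNorm (a b : R) : R :=
  a ^ 2 + a * b + b ^ 2

theorem eisensteinNorm_eq_mul {w : R} (hw : w ^ 2 + w + 1 = 0) (a b : R) :
    eisensteinNorm a b = (a - w * b) * (a + (w + 1) * b) := by
  rw [eisensteinNorm]
  linear_combination b ^ 2 * hw

theorem sum_sq_eq_two_mul_eisensteinNorm {a b c : R} (h : a + b + c = 0) :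
    a ^ 2 + b ^ 2 + c ^ 2 = 2 * eisensteinNorm a b := by
  obtain rfl : c = -(a + b) := eq_neg_of_add_eq_zero_right h
  rw [eisensteinNorm]
  ring

theorem sum_pow_four_eq_two_mul_eisensteinNorm_sq {a b c : R} (h : a + b + c = 0) :
    a ^ 4 + b ^ 4 + c ^ 4 = 2 * eisensteinNorm a b ^ 2 := by
  obtain rfl : c = -(a + b) := eq_neg_of_add_eq_zero_right h
  rw [eisensteinNorm]
  ring

end CommRing

section Algebra

variable {S : Type*} [CommRing S] [Algebra ℂ S]

theorem aeval_f6 (v : Fin 6 → S) :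
    aeval v f6 = 6 * ∑ i, v i ^ 4 - (∑ i, v i ^ 2) ^ 2 := by
  simp [f6]

theorem aeval_f6_of_add_eq_zero {v : Fin 6 → S}
    (h₀₂₅ : v 0 + v 2 + v 5 = 0) (h₁₃₄ : v 1 + v 3 + v 4 = 0) :
    aeval v f6 =
      8 * eisensteinNorm (eisensteinNorm (v 0) (v 2)) (-eisensteinNorm (v 1) (v 3)) := by
  set A := eisensteinNorm (v 0) (v 2) with hA
  set B := eisensteinNorm (v 1) (v 3) with hB
  have sum_sq : ∑ i, v i ^ 2 = 2 * A + 2 * B := by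
    rw [hA, hB, ← sum_sq_eq_two_mul_eisensteinNorm h₀₂₅,
      ← sum_sq_eq_two_mul_eisensteinNorm h₁₃₄, Fin.sum_univ_six]
    ring
  have sum_pow_four : ∑ i, v i ^ 4 = 2 * A ^ 2 + 2 * B ^ 2 := by
    rw [hA, hB, ← sum_pow_four_eq_two_mul_eisensteinNorm_sq h₀₂₅,
      ← sum_pow_four_eq_two_mul_eisensteinNorm_sq h₁₃₄, Fin.sum_univ_six]
    ring
  calc
    aeval v f6 = 6 * (2 * A ^ 2 + 2 * B ^ 2) - (2 * A + 2 * B) ^ 2 := by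
      rw [aeval_f6, sum_sq, sum_pow_four]
    _ = 8 * (A ^ 2 - A * B + B ^ 2) := by ring
    _ = 8 * eisensteinNorm A (-B) := by rw [eisensteinNorm]; ring

end Algebra

theorem q1_mul_q2 {w : ℂ} (hw : w ^ 2 + w + 1 = 0) :
    q1 w * q2 w =
      eisensteinNorm (eisensteinNorm (X 0) (X 2)) (-eisensteinNorm (X 1) (X 3)) := by
  have hCw : (C w ^ 2 + C w + 1 : MvPolynomial (Fin 4) ℂ) = 0 := by
    simpa using congrArg C hw
  have hq1 : q1 w = eisensteinNorm (X 0) (X 2) - C w * -eisensteinNorm (X 1) (X 3) := by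
    rw [mul_neg, sub_neg_eq_add, q1, eisensteinNorm, eisensteinNorm]
  have hq2 : q2 w = eisensteinNorm (X 0) (X 2) + (C w + 1) * -eisensteinNorm (X 1) (X 3) := by
    rw [mul_neg, ← sub_eq_add_neg, q2, C_add, C_1, eisensteinNorm, eisensteinNorm]
  rw [eisensteinNorm_eq_mul hCw, hq1, hq2]

/-- Substituting x₄ := −(x₁+x₃) and x₅ := −(x₀+x₂) into f gives 8·q₁·q₂;
i.e. X ∩ {x₀+x₂+x₅ = x₁+x₃+x₄ = 0} is the union of the two quadrics Q₁ + Q₂. -/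
theorem f_restricted_to_P3_splits (w : ℂ) (hw : w ^ 2 + w + 1 = 0) :
    MvPolynomial.aeval ![X 0, X 1, X 2, X 3, -(X 1 + X 3), -(X 0 + X 2)] f6 =
      8 * q1 w * q2 w := by
  rw [mul_assoc, q1_mul_q2 hw]
  exact aeval_f6_of_add_eq_zero (add_neg_cancel _) (add_neg_cancel _)
end

section
/- The point o := (1, 1, w, w, w², w²) ∈ ℂ⁶ represents a singular point of the quartic X: one has ℓ(o) = 0, f(o) = 0, and ∂f/∂xᵢ evaluated at o equals 24 for every i ∈ {0,…,5}; in particular the gradient of f at o is proportional to the gradient (1,…,1) of ℓ, so the Jacobian of (ℓ, f) at o has rank ≤ 1. -/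
open MvPolynomial

/-- The hyperplane section ℓ = ∑xᵢ. -/
noncomputable def l6 : MvPolynomial (Fin 6) ℂ := ∑ i : Fin 6, X i

/-- The point o = (1, 1, w, w, w², w²) ∈ ℂ⁶. -/
def pt (w : ℂ) : Fin 6 → ℂ := ![1, 1, w, w, w ^ 2, w ^ 2]

/-- The 2×6 Jacobian matrix of (ℓ, f) evaluated at a point p ∈ ℂ⁶. -/
noncomputable def jac (p : Fin 6 → ℂ) : Matrix (Fin 2) (Fin 6) ℂ :=
  Matrix.of ![fun i => MvPolynomial.eval p (MvPolynomial.pderiv i l6),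
              fun i => MvPolynomial.eval p (MvPolynomial.pderiv i f6)]

/- The hyperplane and the quartic are polynomials in the power sums `pₖ = ∑ xᵢᵏ`, namely `ℓ = p₁`
and `f = 6 p₄ - p₂²`, so `∂f/∂xᵢ = 24 xᵢ³ - 4 p₂ xᵢ`. The coordinates of `o` run twice through the
cube roots of unity. Hence `pₖ(o) = 0` for every `k` prime to `3`, which puts `o` on `X` and reduces
the gradient of `f` at `o` to `24 xᵢ³ = 24`. -/

section PowerSums

variable {σ R : Type*} [Fintype σ] [CommSemiring R]

theorem eval_psum (p : σ → R) (n : ℕ) : eval p (psum σ R n) = ∑ j, p j ^ n := by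
  simp only [psum, map_sum, map_pow, eval_X]

theorem pderiv_psum (i : σ) (n : ℕ) :
    pderiv i (psum σ R n) = (n : MvPolynomial σ R) * X i ^ (n - 1) := by
  classical
  simp only [psum, map_sum, pderiv_pow, pderiv_X, Pi.single_apply, mul_ite, mul_one, mul_zero,
    Finset.sum_ite_eq', Finset.mem_univ, if_true]

end PowerSums

section CubeRootsOfUnity

variable {R : Type*} [CommRing R] {w : R}

theorem pow_three_eq_one_of_sq_add_self_add_one (hw : w ^ 2 + w + 1 = 0) : w ^ 3 = 1 := by
  linear_combination (w - 1) * hw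

theorem one_add_pow_add_pow_sq_eq_zero (hw : w ^ 2 + w + 1 = 0) {k : ℕ} (hk : ¬ 3 ∣ k) :
    1 + w ^ k + (w ^ k) ^ 2 = 0 := by
  have hw3 : w ^ 3 = 1 := pow_three_eq_one_of_sq_add_self_add_one hw
  have hmod : k % 3 = 1 ∨ k % 3 = 2 := by lia
  rw [pow_eq_pow_mod k hw3]
  rcases hmod with h | h <;> rw [h]
  · linear_combination hw
  · linear_combination hw + w * hw3

end CubeRootsOfUnity

theorem l6_eq_psum : l6 = psum (Fin 6) ℂ 1 :=
  (psum_one (Fin 6) ℂ).symm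

theorem f6_eq_psum : f6 = 6 * psum (Fin 6) ℂ 4 - psum (Fin 6) ℂ 2 ^ 2 :=
  rfl

theorem eval_pderiv_l6 (p : Fin 6 → ℂ) (i : Fin 6) : eval p (pderiv i l6) = 1 := by
  rw [l6_eq_psum, pderiv_psum]
  simp

theorem pderiv_f6 (i : Fin 6) :
    pderiv i f6 = 24 * X i ^ 3 - 4 * psum (Fin 6) ℂ 2 * X i := by
  have hsix : pderiv i (6 : MvPolynomial (Fin 6) ℂ) = 0 := (pderiv i).map_natCast 6
  rw [f6_eq_psum, map_sub, pderiv_mul, hsix, pderiv_pow, pderiv_psum, pderiv_psum]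
  push_cast
  ring

theorem eval_pderiv_f6 (p : Fin 6 → ℂ) (i : Fin 6) :
    eval p (pderiv i f6) = 24 * p i ^ 3 - 4 * (∑ j, p j ^ 2) * p i := by
  simp [pderiv_f6, eval_psum]

theorem rank_jac_le_one_of_eval_pderiv_f6_eq {p : Fin 6 → ℂ} {c : ℂ}
    (hc : ∀ i, eval p (pderiv i f6) = c) : (jac p).rank ≤ 1 := by
  have hjac : jac p = Matrix.vecMulVec ![1, c] 1 := by
    ext a i
    fin_cases a <;> simp [jac, Matrix.vecMulVec_apply, eval_pderiv_l6, hc]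
  rw [hjac]
  exact Matrix.rank_vecMulVec_le _ _

theorem sum_pt_pow (w : ℂ) (k : ℕ) : ∑ j, pt w j ^ k = 2 * (1 + w ^ k + (w ^ k) ^ 2) := by
  simp only [pt, Fin.sum_univ_six, Matrix.cons_val, one_pow]
  ring

theorem sum_pt_pow_eq_zero {w : ℂ} (hw : w ^ 2 + w + 1 = 0) {k : ℕ} (hk : ¬ 3 ∣ k) :
    ∑ j, pt w j ^ k = 0 := by
  rw [sum_pt_pow, one_add_pow_add_pow_sq_eq_zero hw hk, mul_zero]

theorem pt_pow_three {w : ℂ} (hw : w ^ 2 + w + 1 = 0) (i : Fin 6) : pt w i ^ 3 = 1 := by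
  have hw3 : w ^ 3 = 1 := pow_three_eq_one_of_sq_add_self_add_one hw
  have hw23 : (w ^ 2) ^ 3 = 1 := by rw [pow_right_comm, hw3, one_pow]
  fin_cases i <;> simp [pt, hw3, hw23]

/-- The point o = (1,1,w,w,w²,w²) is a singular point of X: ℓ(o) = 0, f(o) = 0,
∂f/∂xᵢ(o) = 24 for every i, so the gradient of f at o is proportional to the
gradient (1,…,1) of ℓ and the Jacobian of (ℓ, f) at o has rank ≤ 1. -/
theorem o_is_singular_point (w : ℂ) (hw : w ^ 2 + w + 1 = 0) :
    MvPolynomial.eval (pt w) l6 = 0 ∧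
    MvPolynomial.eval (pt w) f6 = 0 ∧
    (∀ i : Fin 6, MvPolynomial.eval (pt w) (MvPolynomial.pderiv i f6) = 24) ∧
    (jac (pt w)).rank ≤ 1 := by
  have hp₁ : ∑ j, pt w j ^ 1 = 0 := sum_pt_pow_eq_zero hw (by norm_num)
  have hp₂ : ∑ j, pt w j ^ 2 = 0 := sum_pt_pow_eq_zero hw (by norm_num)
  have hp₄ : ∑ j, pt w j ^ 4 = 0 := sum_pt_pow_eq_zero hw (by norm_num)
  have hgrad : ∀ i, eval (pt w) (pderiv i f6) = 24 := fun i => by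
    rw [eval_pderiv_f6, hp₂, pt_pow_three hw]
    ring
  refine ⟨?_, ?_, hgrad, rank_jac_le_one_of_eval_pderiv_f6_eq hgrad⟩
  · rw [l6_eq_psum, eval_psum, hp₁]
  · simp [f6_eq_psum, eval_psum, hp₂, hp₄]
end

section
/- For each i ∈ {1,2} and each c ∈ {0,1,2,3}, the point o = (1, 1, w, w, w², w²) belongs to τ^c(Q_i) if and only if c = 0 or c = 2. -/
/-- The coordinate permutation τ = (0 4 1 3) on six letters. -/
def τ6 : Equiv.Perm (Fin 6) := c[0, 4, 1, 3]

/-- The coordinate permutation h = (2 0 4 3 1) on six letters. -/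
def h6 : Equiv.Perm (Fin 6) := c[2, 0, 4, 3, 1]

/-- The action of a coordinate permutation σ on a point p ∈ ℂ⁶: (σ·p)_j = p_{σ⁻¹(j)}. -/
def act (σ : Equiv.Perm (Fin 6)) (p : Fin 6 → ℂ) : Fin 6 → ℂ := fun j => p (σ⁻¹ j)

/-- The affine cone over the quadric Q₁ ⊂ ℙ³ = {x₀+x₂+x₅ = x₁+x₃+x₄ = 0}. -/
def Q1 (w : ℂ) : Set (Fin 6 → ℂ) :=
  {p | p 0 + p 2 + p 5 = 0 ∧ p 1 + p 3 + p 4 = 0 ∧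
    p 0 ^ 2 + p 0 * p 2 + p 2 ^ 2 + w * (p 1 ^ 2 + p 1 * p 3 + p 3 ^ 2) = 0}

/-- The affine cone over the quadric Q₂ ⊂ ℙ³ = {x₀+x₂+x₅ = x₁+x₃+x₄ = 0}. -/
def Q2 (w : ℂ) : Set (Fin 6 → ℂ) :=
  {p | p 0 + p 2 + p 5 = 0 ∧ p 1 + p 3 + p 4 = 0 ∧
    p 0 ^ 2 + p 0 * p 2 + p 2 ^ 2 - (w + 1) * (p 1 ^ 2 + p 1 * p 3 + p 3 ^ 2) = 0}

/-!
The point `o` lies on `σ(Q)` exactly when `o ∘ σ` lies on `Q`. If `σ` fixes `2` and `5`, then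
`ℓ₁ (o ∘ σ) = o (σ 0) + w + w² = o (σ 0) - 1`, so membership forces `o (σ 0) = 1`. Conversely,
suppose `o (σ 0) = 1`. The coordinates of `o`, and their squares, sum to zero, and so do those
indexed by `0, 2, 5` after applying `σ`; hence the same holds for the indices `1, 3, 4`. On the
plane `x + y + z = 0` one has `2 (x² + xy + y²) = x² + y² + z²`, so both summands of the quadratic
equation vanish separately. The 4-cycle `τ` alternates between `{0, 1}`, where `o` equals `1`,
and `{3, 4}`, where it does not.
-/

/-- The affine cone over the quadric of parameter `a` in the pencil spanned by
`x₀² + x₀x₂ + x₂²` and `x₁² + x₁x₃ + x₃²` on `{x₀ + x₂ + x₅ = x₁ + x₃ + x₄ = 0}`. It treats `Q₁` and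
`Q₂` uniformly, as the parameters `w` and `-(w + 1)`. -/
def quadricCone {R : Type*} [CommRing R] (a : R) : Set (Fin 6 → R) :=
  {p | p 0 + p 2 + p 5 = 0 ∧ p 1 + p 3 + p 4 = 0 ∧
    p 0 ^ 2 + p 0 * p 2 + p 2 ^ 2 + a * (p 1 ^ 2 + p 1 * p 3 + p 3 ^ 2) = 0}

theorem Q1_eq_quadricCone (w : ℂ) : Q1 w = quadricCone w := rfl

theorem Q2_eq_quadricCone (w : ℂ) : Q2 w = quadricCone (-(w + 1)) := by
  simp only [Q2, quadricCone, neg_mul, sub_eq_add_neg]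

theorem mem_image_act_iff {σ : Equiv.Perm (Fin 6)} {S : Set (Fin 6 → ℂ)} {x : Fin 6 → ℂ} :
    x ∈ act σ '' S ↔ x ∘ σ ∈ S := by
  constructor
  · rintro ⟨p, hp, rfl⟩
    have act_comp : act σ p ∘ σ = p := funext fun j => congrArg p (σ.symm_apply_apply j)
    rwa [act_comp]
  · intro hx
    exact ⟨x ∘ σ, hx, funext fun j => congrArg x (σ.apply_symm_apply j)⟩

section PowerSums

variable {R : Type*} [CommRing R] [NoZeroDivisors R] [NeZero (2 : R)]

theorem sq_add_mul_add_sq_eq_zero {x y z : R} (hsum : x + y + z = 0)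
    (hsq : x ^ 2 + y ^ 2 + z ^ 2 = 0) : x ^ 2 + x * y + y ^ 2 = 0 := by
  have two_mul_form : 2 * (x ^ 2 + x * y + y ^ 2) = 0 := by
    linear_combination hsq + (x + y - z) * hsum
  exact (mul_eq_zero.mp two_mul_form).resolve_left two_ne_zero

theorem mem_quadricCone_of_sum_eq_zero (a : R) {p : Fin 6 → R} (hsum : ∑ j, p j = 0)
    (hsq : ∑ j, p j ^ 2 = 0) (hsum' : p 0 + p 2 + p 5 = 0)
    (hsq' : p 0 ^ 2 + p 2 ^ 2 + p 5 ^ 2 = 0) : p ∈ quadricCone a := by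
  rw [Fin.sum_univ_six] at hsum hsq
  have hsum'' : p 1 + p 3 + p 4 = 0 := by linear_combination hsum - hsum'
  have hsq'' : p 1 ^ 2 + p 3 ^ 2 + p 4 ^ 2 = 0 := by linear_combination hsq - hsq'
  refine ⟨hsum', hsum'', ?_⟩
  rw [sq_add_mul_add_sq_eq_zero hsum' hsq', sq_add_mul_add_sq_eq_zero hsum'' hsq'', mul_zero,
    add_zero]

end PowerSums

section Point

variable {w : ℂ}

theorem sum_pt (hw : w ^ 2 + w + 1 = 0) : ∑ j, pt w j = 0 := by
  simp only [Fin.sum_univ_six, pt, Matrix.cons_val]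
  linear_combination 2 * hw

theorem sum_pt_sq (hw : w ^ 2 + w + 1 = 0) : ∑ j, pt w j ^ 2 = 0 := by
  simp only [Fin.sum_univ_six, pt, Matrix.cons_val]
  linear_combination 2 * (w ^ 2 - w + 1) * hw

theorem pt_eq_one_iff (hw : w ^ 2 + w + 1 = 0) (j : Fin 6) : pt w j = 1 ↔ j = 0 ∨ j = 1 := by
  have w_ne_one : w ≠ 1 := by
    rintro rfl
    norm_num at hw
  have w_sq_ne_one : w ^ 2 ≠ 1 := fun h => w_ne_one (by linear_combination (w - 1) * hw - w * h)
  fin_cases j <;> simp [pt, w_ne_one, w_sq_ne_one]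

theorem pt_mem_image_act_quadricCone_iff (hw : w ^ 2 + w + 1 = 0) (a : ℂ)
    {σ : Equiv.Perm (Fin 6)} (hσ₂ : σ 2 = 2) (hσ₅ : σ 5 = 5) :
    pt w ∈ act σ '' quadricCone a ↔ pt w (σ 0) = 1 := by
  have comp_two : (pt w ∘ σ) 2 = w := congrArg (pt w) hσ₂
  have comp_five : (pt w ∘ σ) 5 = w ^ 2 := congrArg (pt w) hσ₅
  rw [mem_image_act_iff]
  constructor
  · rintro ⟨hsum', -, -⟩
    rw [comp_two, comp_five, Function.comp_apply] at hsum'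
    linear_combination hsum' - hw
  · intro h
    have comp_zero : (pt w ∘ σ) 0 = 1 := h
    apply mem_quadricCone_of_sum_eq_zero a
    · exact (Equiv.sum_comp σ (pt w)).trans (sum_pt hw)
    · exact (Equiv.sum_comp σ fun j => pt w j ^ 2).trans (sum_pt_sq hw)
    · rw [comp_zero, comp_two, comp_five]
      linear_combination hw
    · rw [comp_zero, comp_two, comp_five]
      linear_combination (w ^ 2 - w + 1) * hw

end Point

theorem τ6_pow_apply_zero_eq_zero_or_one_iff (c : ℕ) :
    ((τ6 ^ c) 0 = 0 ∨ (τ6 ^ c) 0 = 1) ↔ Even c := by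
  have τ6_pow_four : τ6 ^ 4 = 1 := by decide
  have small_powers : ∀ r < 4, ((τ6 ^ r) 0 = 0 ∨ (τ6 ^ r) 0 = 1) ↔ Even r := by decide
  rw [pow_eq_pow_mod c τ6_pow_four, small_powers _ (Nat.mod_lt c four_pos), Nat.even_iff,
    Nat.even_iff, Nat.mod_mod_of_dvd c (by decide : 2 ∣ 4)]

theorem o_mem_tau_pow_Q_iff_general {w : ℂ} (hw : w ^ 2 + w + 1 = 0) (a : ℂ) (c : ℕ) :
    pt w ∈ act (τ6 ^ c) '' quadricCone a ↔ Even c := by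
  have fixes_two : (τ6 ^ c) 2 = 2 := Equiv.Perm.pow_apply_eq_self_of_apply_eq_self (by decide) c
  have fixes_five : (τ6 ^ c) 5 = 5 := Equiv.Perm.pow_apply_eq_self_of_apply_eq_self (by decide) c
  rw [pt_mem_image_act_quadricCone_iff hw a fixes_two fixes_five, pt_eq_one_iff hw,
    τ6_pow_apply_zero_eq_zero_or_one_iff]

/-- For each i ∈ {1,2} and 0 ≤ c ≤ 3, the point o belongs to τ^c(Q_i)
iff c = 0 or c = 2. -/
theorem o_mem_tau_pow_Q_iff (w : ℂ) (hw : w ^ 2 + w + 1 = 0) :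
    ∀ Q ∈ ({Q1 w, Q2 w} : Set (Set (Fin 6 → ℂ))), ∀ c : ℕ, c ≤ 3 →
      (pt w ∈ act (τ6 ^ c) '' Q ↔ c = 0 ∨ c = 2) := by
  rintro Q (rfl | rfl) c hc
  all_goals
    simp only [Q1_eq_quadricCone, Q2_eq_quadricCone, o_mem_tau_pow_Q_iff_general hw, Nat.even_iff]
    omega
end

section
/- For each i ∈ {1,2}, each a ∈ {0,1,2,3,4} and each b ∈ {0,1,2,3}, the point o = (1, 1, w, w, w², w²) belongs to h^a τ^b (Q_i) if and only if (a,b) ∈ {(0,0), (3,0), (4,0), (0,2), (3,3), (1,2), (4,2), (1,1)}. -/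
/-!
Two distinct elements `x`, `y` of a domain with the same cube satisfy `x² + xy + y² = 0`, and three
such elements sum to zero exactly when they are pairwise distinct. The coordinates of `o` are cube
roots of unity, equal within each of the pairs `{0, 1}`, `{2, 3}`, `{4, 5}`. Hence `σ⁻¹ · o`
satisfies `ℓ₁ = 0` iff `σ 0`, `σ 2`, `σ 5` lie in different pairs; then `ℓ₂ = 0` follows because
the coordinates of `o` sum to zero, and both quadratic forms `x₀² + x₀x₂ + x₂²` and
`x₁² + x₁x₃ + x₃²` vanish separately. Membership in the cone is therefore a condition on `σ` alone,
the same for every quadric of the pencil, and `h⁵ = τ⁴ = 1` leaves only twenty products `h^a τ^b`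
to test.
-/

section CommonCube

variable {R : Type*} [CommRing R] [NoZeroDivisors R] {x y z : R}

theorem sq_add_mul_add_sq_eq_zero_of_cube_eq (h : x ^ 3 = y ^ 3) (hne : x ≠ y) :
    x ^ 2 + x * y + y ^ 2 = 0 :=
  mul_left_cancel₀ (sub_ne_zero.2 hne) (by linear_combination h)

theorem add_add_eq_zero_of_cube_eq (hxy : x ^ 3 = y ^ 3) (hxz : x ^ 3 = z ^ 3)
    (hxy' : x ≠ y) (hyz' : y ≠ z) (hxz' : x ≠ z) : x + y + z = 0 :=
  mul_left_cancel₀ (sub_ne_zero.2 hyz') <| by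
    linear_combination sq_add_mul_add_sq_eq_zero_of_cube_eq hxy hxy' -
      sq_add_mul_add_sq_eq_zero_of_cube_eq hxz hxz'

theorem ne_of_add_add_eq_zero_of_cube_eq (h3 : (3 : R) ≠ 0) (hx : x ≠ 0) (hxz : x ^ 3 = z ^ 3)
    (h : x + y + z = 0) : x ≠ y := by
  rintro rfl
  have hz : z = -2 * x := by linear_combination h
  have h9 : 3 ^ 2 * x ^ 3 = 0 := by
    rw [hz] at hxz
    linear_combination hxz
  exact mul_ne_zero (pow_ne_zero 2 h3) (pow_ne_zero 3 hx) h9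

theorem add_add_eq_zero_iff_of_cube_eq (h3 : (3 : R) ≠ 0) (hx : x ≠ 0) (hxy : x ^ 3 = y ^ 3)
    (hxz : x ^ 3 = z ^ 3) : x + y + z = 0 ↔ x ≠ y ∧ y ≠ z ∧ x ≠ z := by
  refine ⟨fun h ↦ ⟨?_, ?_, ?_⟩, fun ⟨hxy', hyz', hxz'⟩ ↦
    add_add_eq_zero_of_cube_eq hxy hxz hxy' hyz' hxz'⟩
  · exact ne_of_add_add_eq_zero_of_cube_eq h3 hx hxz h
  · have hy : y ≠ 0 := by
      rintro rfl
      exact hx (pow_eq_zero_iff three_ne_zero |>.1 (by simpa using hxy))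
    exact ne_of_add_add_eq_zero_of_cube_eq h3 hy hxy.symm (by linear_combination h)
  · exact ne_of_add_add_eq_zero_of_cube_eq h3 hx hxy (by linear_combination h)

end CommonCube

theorem isPrimitiveRoot_three_of_sq_add_self_add_one {R : Type*} [CommRing R] {w : R}
    (h3 : (3 : R) ≠ 0) (hw : w ^ 2 + w + 1 = 0) : IsPrimitiveRoot w 3 := by
  have hw_cube : w ^ 3 = 1 := by linear_combination (w - 1) * hw
  have hw_ne : w ≠ 1 := by
    rintro rfl
    exact h3 (by linear_combination hw)
  exact IsPrimitiveRoot.iff_orderOf.2 (orderOf_eq_prime hw_cube hw_ne)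

theorem mem_image_comp_inv_iff {ι α : Type*} (σ : Equiv.Perm ι) (Q : Set (ι → α)) (p : ι → α) :
    p ∈ (· ∘ ⇑σ⁻¹) '' Q ↔ p ∘ σ ∈ Q :=
  Set.mem_image_iff_of_inverse (g := (· ∘ ⇑σ)) (fun q ↦ by ext; simp) (fun q ↦ by ext; simp)

/-- The index of the pair `{0, 1}`, `{2, 3}` or `{4, 5}` that contains the coordinate `j`. The point
`o` is constant on each of these pairs. -/
def pairIndex (j : Fin 6) : ℕ := j / 2

/-- The point `o` with coordinates in an arbitrary monoid. -/
def pairedPowers {M : Type*} [Monoid M] (w : M) (j : Fin 6) : M := w ^ pairIndex j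

/-- The affine cone cut out in `{ℓ₁ = ℓ₂ = 0}` by the member `[s : t]` of the pencil of quadrics
containing `Q₁` and `Q₂`. -/
def pencilCone {R : Type*} [CommRing R] (s t : R) : Set (Fin 6 → R) :=
  {p | p 0 + p 2 + p 5 = 0 ∧ p 1 + p 3 + p 4 = 0 ∧
    s * (p 0 ^ 2 + p 0 * p 2 + p 2 ^ 2) + t * (p 1 ^ 2 + p 1 * p 3 + p 3 ^ 2) = 0}

/-- The permutation `σ` moves the coordinates occurring in `ℓ₁` to three different pairs. -/
def SeparatesPairs (σ : Equiv.Perm (Fin 6)) : Prop :=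
  pairIndex (σ 0) ≠ pairIndex (σ 2) ∧ pairIndex (σ 2) ≠ pairIndex (σ 5) ∧
    pairIndex (σ 0) ≠ pairIndex (σ 5)

instance : DecidablePred SeparatesPairs := fun σ ↦ by
  unfold SeparatesPairs
  infer_instance

theorem pairIndex_lt_three (j : Fin 6) : pairIndex j < 3 := by
  unfold pairIndex
  omega

theorem pt_eq_pairedPowers (w : ℂ) : pt w = pairedPowers w := by
  ext j
  fin_cases j <;> simp [pt, pairedPowers, pairIndex]

theorem Q1_eq_pencilCone (w : ℂ) : Q1 w = pencilCone 1 w := by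
  simp only [Q1, pencilCone, one_mul]

theorem Q2_eq_pencilCone (w : ℂ) : Q2 w = pencilCone 1 (-(w + 1)) := by
  simp only [Q2, pencilCone, one_mul, neg_mul, sub_eq_add_neg]

theorem pairedPowers_eq_iff {M : Type*} [CommMonoid M] {w : M} (hw : IsPrimitiveRoot w 3)
    (i j : Fin 6) : pairedPowers w i = pairedPowers w j ↔ pairIndex i = pairIndex j :=
  ⟨hw.pow_inj (pairIndex_lt_three i) (pairIndex_lt_three j), congrArg (w ^ ·)⟩

theorem pairedPowers_pow_three {M : Type*} [Monoid M] {w : M} (hw : w ^ 3 = 1) (j : Fin 6) :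
    pairedPowers w j ^ 3 = 1 := by
  rw [pairedPowers, pow_right_comm, hw, one_pow]

section PrimitiveRoot

variable {R : Type*} [CommRing R] [IsDomain R] {w : R}

theorem sum_pairedPowers (hw : IsPrimitiveRoot w 3) : ∑ j, pairedPowers w j = 0 := by
  have hgeom : 1 + w + w ^ 2 = 0 := by
    simpa [Finset.sum_range_succ] using hw.geom_sum_eq_zero (by norm_num)
  rw [Fin.sum_univ_six]
  change w ^ 0 + w ^ 0 + w ^ 1 + w ^ 1 + w ^ 2 + w ^ 2 = 0
  linear_combination 2 * hgeom

theorem pairedPowers_add_add_eq_zero_iff (hw : IsPrimitiveRoot w 3) (i j k : Fin 6) :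
    pairedPowers w i + pairedPowers w j + pairedPowers w k = 0 ↔
      pairIndex i ≠ pairIndex j ∧ pairIndex j ≠ pairIndex k ∧ pairIndex i ≠ pairIndex k := by
  have h3 : (3 : R) ≠ 0 := mod_cast hw.neZero'.out
  have hi : pairedPowers w i ≠ 0 := pow_ne_zero _ (hw.ne_zero three_ne_zero)
  have hcube (l : Fin 6) : pairedPowers w i ^ 3 = pairedPowers w l ^ 3 := by
    simp only [pairedPowers_pow_three hw.pow_eq_one]
  simp only [add_add_eq_zero_iff_of_cube_eq h3 hi (hcube j) (hcube k), ne_eq,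
    pairedPowers_eq_iff hw]

theorem sq_add_mul_add_sq_pairedPowers_eq_zero (hw : IsPrimitiveRoot w 3) {i j : Fin 6}
    (hij : pairIndex i ≠ pairIndex j) :
    pairedPowers w i ^ 2 + pairedPowers w i * pairedPowers w j + pairedPowers w j ^ 2 = 0 :=
  sq_add_mul_add_sq_eq_zero_of_cube_eq (by simp only [pairedPowers_pow_three hw.pow_eq_one])
    (mt (pairedPowers_eq_iff hw i j).1 hij)

theorem pairedPowers_comp_mem_pencilCone_iff (hw : IsPrimitiveRoot w 3) (s t : R)
    (σ : Equiv.Perm (Fin 6)) : pairedPowers w ∘ σ ∈ pencilCone s t ↔ SeparatesPairs σ := by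
  refine ⟨fun h ↦ (pairedPowers_add_add_eq_zero_iff hw _ _ _).1 h.1, fun hσ ↦ ?_⟩
  have hℓ₁ := (pairedPowers_add_add_eq_zero_iff hw _ _ _).2 hσ
  have hsum : ∑ j, pairedPowers w (σ j) = 0 := (Equiv.sum_comp σ _).trans (sum_pairedPowers hw)
  rw [Fin.sum_univ_six] at hsum
  have hℓ₂ : pairedPowers w (σ 1) + pairedPowers w (σ 3) + pairedPowers w (σ 4) = 0 := by
    linear_combination hsum - hℓ₁
  have hσ' := (pairedPowers_add_add_eq_zero_iff hw _ _ _).1 hℓ₂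
  refine ⟨hℓ₁, hℓ₂, ?_⟩
  simp only [Function.comp_apply, sq_add_mul_add_sq_pairedPowers_eq_zero hw hσ.1,
    sq_add_mul_add_sq_pairedPowers_eq_zero hw hσ'.1, mul_zero, add_zero]

end PrimitiveRoot

theorem h6_pow_five : h6 ^ 5 = 1 := by decide +kernel

theorem τ6_pow_four : τ6 ^ 4 = 1 := by decide +kernel

theorem separatesPairs_h6_pow_mul_τ6_pow_iff (a b : ℕ) :
    SeparatesPairs (h6 ^ a * τ6 ^ b) ↔
      (a % 5, b % 4) ∈ ({(0, 0), (3, 0), (4, 0), (0, 2), (3, 3), (1, 2), (4, 2), (1, 1)} :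
        Finset (ℕ × ℕ)) := by
  rw [pow_eq_pow_mod a h6_pow_five, pow_eq_pow_mod b τ6_pow_four]
  have hi : a % 5 < 5 := a.mod_lt (by norm_num)
  have hj : b % 4 < 4 := b.mod_lt (by norm_num)
  generalize a % 5 = i at *
  generalize b % 4 = j at *
  revert j
  revert i
  decide +kernel

theorem o_mem_h_pow_tau_pow_Q_iff_general {R : Type*} [CommRing R] [IsDomain R] {w : R}
    (hw : IsPrimitiveRoot w 3) (s t : R) (a b : ℕ) :
    pairedPowers w ∈ (· ∘ ⇑(h6 ^ a * τ6 ^ b)⁻¹) '' pencilCone s t ↔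
      (a % 5, b % 4) ∈ ({(0, 0), (3, 0), (4, 0), (0, 2), (3, 3), (1, 2), (4, 2), (1, 1)} :
        Set (ℕ × ℕ)) := by
  rw [mem_image_comp_inv_iff, pairedPowers_comp_mem_pencilCone_iff hw,
    separatesPairs_h6_pow_mul_τ6_pow_iff, ← Finset.mem_coe]
  simp only [Finset.coe_insert, Finset.coe_singleton]

/-- For each i ∈ {1,2}, 0 ≤ a ≤ 4 and 0 ≤ b ≤ 3, the point o belongs to
h^a τ^b (Q_i) iff (a,b) is one of the eight listed pairs. -/
theorem o_mem_h_pow_tau_pow_Q_iff (w : ℂ) (hw : w ^ 2 + w + 1 = 0) :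
    ∀ Q ∈ ({Q1 w, Q2 w} : Set (Set (Fin 6 → ℂ))), ∀ a b : ℕ, a ≤ 4 → b ≤ 3 →
      (pt w ∈ act (h6 ^ a * τ6 ^ b) '' Q ↔
        (a, b) ∈ ({(0, 0), (3, 0), (4, 0), (0, 2), (3, 3), (1, 2), (4, 2), (1, 1)} :
          Set (ℕ × ℕ))) := by
  intro Q hQ a b ha hb
  obtain ⟨t, rfl⟩ : ∃ t, Q = pencilCone 1 t := by
    rcases hQ with rfl | rfl
    exacts [⟨w, Q1_eq_pencilCone w⟩, ⟨-(w + 1), Q2_eq_pencilCone w⟩]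
  have hw3 := isPrimitiveRoot_three_of_sq_add_self_add_one three_ne_zero hw
  have h := o_mem_h_pow_tau_pow_Q_iff_general hw3 1 t a b
  rw [Nat.mod_eq_of_lt (by lia : a < 5), Nat.mod_eq_of_lt (by lia : b < 4)] at h
  rw [pt_eq_pairedPowers]
  exact h
end

section
/- For each i ∈ {1,2} the following equalities and inequalities of subsets of ℂ⁶ hold: (a) τ²(Q_i) = h⁴(Q_i), this set contains o, and τ²(Q_i) ≠ Q_i; (b) h⁴τ²(Q_i) = h³(Q_i), this set contains o, and h⁴τ²(Q_i) is different from both Q_i and τ²(Q_i); (c) hτ²(Q_i) = Q_i; (d) h³τ³(Q_i) = hτ(Q_i), this set contains o, and h³τ³(Q_i) is different from Q_i, τ²(Q_i) and h⁴τ²(Q_i). -/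
/-!
On the plane `a + b + e = 0` one has `a² + b² + e² = 2 (a² + a b + b²)`, so `Q_i` is cut out by the
sums and the sums of squares over the two blocks `A = {0, 2, 5}` and `Aᶜ = {1, 3, 4}`. A coordinate
permutation therefore acts on it only through the block `A`, which makes the equalities a matter of
comparing images of `A`. The point `o` lies on the cone of every block meeting each of the pairs
`{0, 1}`, `{2, 3}`, `{4, 5}` once, because `1 + w + w² = 0`. Finally, placing `1, w, w²` at three
coordinates of a block `A` gives a point of its cone, and it leaves the cone of a block `B` that
contains some but not all of these coordinates: no proper nonempty part of `1, w, w²` sums to zero.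
-/

section BlockQuadric

open Finset

variable {ι R : Type*} [Fintype ι] [DecidableEq ι] [CommRing R]

/-- The affine cone in `ι → R` attached to the partition `{A, Aᶜ}` of the coordinates: both block
sums vanish, and so does the combination with weights `1` and `c` of the sums of squares over the
blocks. The quadrics of the paper and all their images under coordinate permutations have this
shape. -/
def blockQuadric (c : R) (A : Finset ι) : Set (ι → R) :=
  {p | ∑ i ∈ A, p i = 0 ∧ ∑ i ∈ Aᶜ, p i = 0 ∧ ∑ i ∈ A, p i ^ 2 + c * ∑ i ∈ Aᶜ, p i ^ 2 = 0}

theorem comp_mem_blockQuadric_iff (σ : Equiv.Perm ι) (c : R) (A : Finset ι) (p : ι → R) :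
    p ∘ σ ∈ blockQuadric c A ↔ p ∈ blockQuadric c (A.map σ.toEmbedding) := by
  have map_compl : (A.map σ.toEmbedding)ᶜ = Aᶜ.map σ.toEmbedding := by
    simp only [compl_eq_univ_sdiff, Finset.map_sdiff, map_univ_equiv]
  simp [blockQuadric, map_compl]

theorem sum_sq_eq_two_mul {a b e : R} (h : a + b + e = 0) :
    a ^ 2 + b ^ 2 + e ^ 2 = 2 * (a ^ 2 + a * b + b ^ 2) := by
  linear_combination (e - a - b) * h

theorem sum_sq_cubeRoots_eq_zero {w : R} (hw : w ^ 2 + w + 1 = 0) :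
    1 ^ 2 + w ^ 2 + (w ^ 2) ^ 2 = 0 := by
  linear_combination (w ^ 2 - w + 1) * hw

theorem cubeRoots_mem_blockQuadric {w : R} (hw : w ^ 2 + w + 1 = 0) (c : R) {A : Finset ι}
    {i j k : ι} (hi : i ∈ A) (hj : j ∈ A) (hk : k ∈ A) (hij : i ≠ j) (hik : i ≠ k) (hjk : j ≠ k) :
    Pi.single i 1 + Pi.single j w + Pi.single k (w ^ 2) ∈ blockQuadric c A := by
  have sq_apply (l : ι) : (Pi.single i 1 + Pi.single j w + Pi.single k (w ^ 2) : ι → R) l ^ 2 =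
      (Pi.single i (1 ^ 2) + Pi.single j (w ^ 2) + Pi.single k ((w ^ 2) ^ 2) : ι → R) l := by
    simp only [Pi.add_apply, Pi.single_apply]
    split_ifs <;> simp_all
  refine ⟨?_, ?_, ?_⟩
  · simpa [sum_add_distrib, hi, hj, hk] using by linear_combination hw
  · simp [sum_add_distrib, hi, hj, hk]
  · simp only [sq_apply]
    simpa [sum_add_distrib, hi, hj, hk] using sum_sq_cubeRoots_eq_zero hw

theorem subset_of_blockQuadric_subset [Nontrivial R] {w : R} (hw : w ^ 2 + w + 1 = 0) {c d : R}
    {A B : Finset ι} (hA : 3 ≤ #A) (hAB : (A ∩ B).Nonempty)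
    (h : blockQuadric c A ⊆ blockQuadric d B) : A ⊆ B := by
  intro i hi
  by_contra hiB
  obtain ⟨j, hj⟩ := hAB
  obtain ⟨hjA, hjB⟩ := mem_inter.mp hj
  obtain ⟨k, hk, hk'⟩ := exists_mem_notMem_of_card_lt_card (card_le_two.trans_lt hA : #{i, j} < #A)
  obtain ⟨hki, hkj⟩ : k ≠ i ∧ k ≠ j := by simpa using hk'
  have hij : i ≠ j := fun hij => hiB (hij ▸ hjB)
  have sum_eq := (h (cubeRoots_mem_blockQuadric hw c hi hjA hk hij hki.symm hkj.symm)).1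
  by_cases hkB : k ∈ B
  · have : w + w ^ 2 = 0 := by simpa [sum_add_distrib, hiB, hjB, hkB] using sum_eq
    exact one_ne_zero (by linear_combination hw - this)
  · have : w = 0 := by simpa [sum_add_distrib, hiB, hjB, hkB] using sum_eq
    exact one_ne_zero (by linear_combination hw - (w + 1) * this)

theorem blockQuadric_ne [Nontrivial R] {w : R} (hw : w ^ 2 + w + 1 = 0) {c d : R}
    {A B : Finset ι} (hA : 3 ≤ #A) (hAB : (A ∩ B).Nonempty) (h : ¬A ⊆ B) :
    blockQuadric c A ≠ blockQuadric d B :=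
  fun heq => h (subset_of_blockQuadric_subset hw hA hAB heq.subset)

end BlockQuadric

section PaperQuadrics

open Finset

/-- The subset `A` contains exactly one element of each of the pairs `{0, 1}`, `{2, 3}`, `{4, 5}`,
on which the coordinates of `o` are constant. -/
abbrev IsTransversal (A : Finset (Fin 6)) : Prop :=
  (0 ∈ A ↔ 1 ∉ A) ∧ (2 ∈ A ↔ 3 ∉ A) ∧ (4 ∈ A ↔ 5 ∉ A)

theorem IsTransversal.compl {A : Finset (Fin 6)} (hA : IsTransversal A) : IsTransversal Aᶜ := by
  simpa only [IsTransversal, mem_compl, not_iff_not] using hA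

theorem IsTransversal.sum_eq {M : Type*} [AddCommMonoid M] {A : Finset (Fin 6)}
    (hA : IsTransversal A) (x y z : M) : ∑ i ∈ A, ![x, x, y, y, z, z] i = x + y + z := by
  obtain ⟨h₀₁, h₂₃, h₄₅⟩ := hA
  have sum_univ := Finset.sum_ite_mem univ A ![x, x, y, y, z, z]
  rw [univ_inter] at sum_univ
  rw [← sum_univ, Fin.sum_univ_six]
  by_cases h₁ : 1 ∈ A <;> by_cases h₃ : 3 ∈ A <;> by_cases h₅ : 5 ∈ A <;>
    simp [h₀₁, h₂₃, h₄₅, h₁, h₃, h₅]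

theorem pt_mem_blockQuadric {w : ℂ} (hw : w ^ 2 + w + 1 = 0) (c : ℂ) {A : Finset (Fin 6)}
    (hA : IsTransversal A) : pt w ∈ blockQuadric c A := by
  have sum_pt {B : Finset (Fin 6)} (hB : IsTransversal B) : ∑ i ∈ B, pt w i = 0 :=
    (hB.sum_eq 1 w (w ^ 2)).trans (by linear_combination hw)
  have sum_pt_sq {B : Finset (Fin 6)} (hB : IsTransversal B) : ∑ i ∈ B, pt w i ^ 2 = 0 := by
    have sq_apply (i : Fin 6) :
        pt w i ^ 2 = ![1 ^ 2, 1 ^ 2, w ^ 2, w ^ 2, (w ^ 2) ^ 2, (w ^ 2) ^ 2] i := by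
      fin_cases i <;> rfl
    simp only [sq_apply, hB.sum_eq, sum_sq_cubeRoots_eq_zero hw]
  exact ⟨sum_pt hA, sum_pt hA.compl, by rw [sum_pt_sq hA, sum_pt_sq hA.compl, mul_zero, add_zero]⟩

theorem act_image_blockQuadric (σ : Equiv.Perm (Fin 6)) (c : ℂ) (A : Finset (Fin 6)) :
    act σ '' blockQuadric c A = blockQuadric c (A.map σ.toEmbedding) := by
  ext p
  rw [← comp_mem_blockQuadric_iff]
  constructor
  · rintro ⟨q, hq, rfl⟩
    simpa [act, Function.comp_def] using hq
  · exact fun hp => ⟨p ∘ σ, hp, funext fun i => congrArg p (σ.apply_symm_apply i)⟩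

theorem Q1_eq_blockQuadric (c : ℂ) : Q1 c = blockQuadric c {0, 2, 5} := by
  have compl_eq : ({0, 2, 5} : Finset (Fin 6))ᶜ = {1, 3, 4} := by decide
  ext p
  simp only [Q1, blockQuadric, compl_eq, Set.mem_ofPred_eq, mem_insert, mem_singleton,
    Fin.reduceEq, or_self, not_false_eq_true, sum_insert, sum_singleton, ← add_assoc]
  refine and_congr_right fun h₀₂₅ => and_congr_right fun h₁₃₄ => ?_
  rw [sum_sq_eq_two_mul h₀₂₅, sum_sq_eq_two_mul h₁₃₄, mul_left_comm, ← mul_add,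
    mul_eq_zero_iff_left (two_ne_zero' ℂ)]

theorem Q2_eq_Q1 (w : ℂ) : Q2 w = Q1 (-(w + 1)) := by
  simp only [Q1, Q2, neg_mul, sub_eq_add_neg]

theorem act_image_Q1 (c : ℂ) {σ : Equiv.Perm (Fin 6)} {A : Finset (Fin 6)}
    (hσ : ({0, 2, 5} : Finset (Fin 6)).map σ.toEmbedding = A) :
    act σ '' Q1 c = blockQuadric c A := by
  rw [Q1_eq_blockQuadric, act_image_blockQuadric, hσ]

end PaperQuadrics

theorem images_of_Q_under_G_general (w c : ℂ) (hw : w ^ 2 + w + 1 = 0) :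
    (act (τ6 ^ 2) '' Q1 c = act (h6 ^ 4) '' Q1 c ∧
      pt w ∈ act (τ6 ^ 2) '' Q1 c ∧
      act (τ6 ^ 2) '' Q1 c ≠ Q1 c) ∧
    (act (h6 ^ 4 * τ6 ^ 2) '' Q1 c = act (h6 ^ 3) '' Q1 c ∧
      pt w ∈ act (h6 ^ 4 * τ6 ^ 2) '' Q1 c ∧
      act (h6 ^ 4 * τ6 ^ 2) '' Q1 c ≠ Q1 c ∧
      act (h6 ^ 4 * τ6 ^ 2) '' Q1 c ≠ act (τ6 ^ 2) '' Q1 c) ∧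
    (act (h6 * τ6 ^ 2) '' Q1 c = Q1 c) ∧
    (act (h6 ^ 3 * τ6 ^ 3) '' Q1 c = act (h6 * τ6) '' Q1 c ∧
      pt w ∈ act (h6 ^ 3 * τ6 ^ 3) '' Q1 c ∧
      act (h6 ^ 3 * τ6 ^ 3) '' Q1 c ≠ Q1 c ∧
      act (h6 ^ 3 * τ6 ^ 3) '' Q1 c ≠ act (τ6 ^ 2) '' Q1 c ∧
      act (h6 ^ 3 * τ6 ^ 3) '' Q1 c ≠ act (h6 ^ 4 * τ6 ^ 2) '' Q1 c) := by
  have image_τ2 : act (τ6 ^ 2) '' Q1 c = blockQuadric c {1, 2, 5} :=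
    act_image_Q1 c (by decide)
  have image_h4 : act (h6 ^ 4) '' Q1 c = blockQuadric c {1, 2, 5} :=
    act_image_Q1 c (by decide)
  have image_h4τ2 : act (h6 ^ 4 * τ6 ^ 2) '' Q1 c = blockQuadric c {1, 3, 5} :=
    act_image_Q1 c (by decide)
  have image_h3 : act (h6 ^ 3) '' Q1 c = blockQuadric c {1, 3, 5} :=
    act_image_Q1 c (by decide)
  have image_hτ2 : act (h6 * τ6 ^ 2) '' Q1 c = blockQuadric c {0, 2, 5} :=
    act_image_Q1 c (by decide)
  have image_h3τ3 : act (h6 ^ 3 * τ6 ^ 3) '' Q1 c = blockQuadric c {0, 3, 5} :=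
    act_image_Q1 c (by decide)
  have image_hτ : act (h6 * τ6) '' Q1 c = blockQuadric c {0, 3, 5} :=
    act_image_Q1 c (by decide)
  rw [image_τ2, image_h4, image_h4τ2, image_h3, image_hτ2, image_h3τ3, image_hτ,
    Q1_eq_blockQuadric]
  have pt_mem {A : Finset (Fin 6)} (hA : IsTransversal A) : pt w ∈ blockQuadric c A :=
    pt_mem_blockQuadric hw c hA
  have ne {A B : Finset (Fin 6)} (h : 3 ≤ A.card ∧ (A ∩ B).Nonempty ∧ ¬A ⊆ B) :
      blockQuadric c A ≠ blockQuadric c B := blockQuadric_ne hw h.1 h.2.1 h.2.2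
  refine ⟨⟨rfl, pt_mem ?_, ne ?_⟩, ⟨rfl, pt_mem ?_, ne ?_, ne ?_⟩, rfl,
    ⟨rfl, pt_mem ?_, ne ?_, ne ?_, ne ?_⟩⟩ <;> decide

/-- Lemma on the images of the quadrics Q_i under elements of G:
(a) τ²(Q_i) = h⁴(Q_i) ∋ o and τ²(Q_i) ≠ Q_i;
(b) h⁴τ²(Q_i) = h³(Q_i) ∋ o and h⁴τ²(Q_i) ≠ Q_i, τ²(Q_i);
(c) hτ²(Q_i) = Q_i;
(d) h³τ³(Q_i) = hτ(Q_i) ∋ o and h³τ³(Q_i) ≠ Q_i, τ²(Q_i), h⁴τ²(Q_i). -/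
theorem images_of_Q_under_G (w : ℂ) (hw : w ^ 2 + w + 1 = 0) :
    ∀ Q ∈ ({Q1 w, Q2 w} : Set (Set (Fin 6 → ℂ))),
      (act (τ6 ^ 2) '' Q = act (h6 ^ 4) '' Q ∧
        pt w ∈ act (τ6 ^ 2) '' Q ∧
        act (τ6 ^ 2) '' Q ≠ Q) ∧
      (act (h6 ^ 4 * τ6 ^ 2) '' Q = act (h6 ^ 3) '' Q ∧
        pt w ∈ act (h6 ^ 4 * τ6 ^ 2) '' Q ∧
        act (h6 ^ 4 * τ6 ^ 2) '' Q ≠ Q ∧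
        act (h6 ^ 4 * τ6 ^ 2) '' Q ≠ act (τ6 ^ 2) '' Q) ∧
      (act (h6 * τ6 ^ 2) '' Q = Q) ∧
      (act (h6 ^ 3 * τ6 ^ 3) '' Q = act (h6 * τ6) '' Q ∧
        pt w ∈ act (h6 ^ 3 * τ6 ^ 3) '' Q ∧
        act (h6 ^ 3 * τ6 ^ 3) '' Q ≠ Q ∧
        act (h6 ^ 3 * τ6 ^ 3) '' Q ≠ act (τ6 ^ 2) '' Q ∧
        act (h6 ^ 3 * τ6 ^ 3) '' Q ≠ act (h6 ^ 4 * τ6 ^ 2) '' Q) := by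
  rintro Q (rfl | rfl)
  · exact images_of_Q_under_G_general w w hw
  · exact Q2_eq_Q1 w ▸ images_of_Q_under_G_general w _ hw
end

section
/- The cyclic subgroup generated by h is a normal subgroup of G of order 5, and every nontrivial normal subgroup of G contains h; in particular ⟨h⟩ is the unique minimal normal subgroup of G. -/
/-- The subgroup G = ⟨τ, h⟩ of S₆. -/
def G6 : Subgroup (Equiv.Perm (Fin 6)) := Subgroup.closure {τ6, h6}

lemma h6_mem_G6 : h6 ∈ G6 := Subgroup.subset_closure (by simp)

/-- h as an element of the group G. -/
def h6G : G6 := ⟨h6, h6_mem_G6⟩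

/-!
Conjugation by `τ` sends `h` to `h ^ 2`, so `⟨h⟩` is normal in `G`. As `h` is a cycle with a single
fixed point, it commutes only with its own powers, so `⟨h⟩` is self-centralizing. A normal subgroup
meeting `⟨h⟩` trivially would centralize it and hence lie in it, so it would be trivial; any other
one contains `⟨h⟩`, because the order of `⟨h⟩` is prime.
-/

section Group

open Subgroup

variable {G : Type*} [Group G]

theorem mem_normalizer_zpowers_of_conj_mem {g x : G} (hx : IsOfFinOrder x)
    (hgx : g * x * g⁻¹ ∈ zpowers x) : g ∈ normalizer (zpowers x : Set G) := by
  have : Finite (zpowers x) := hx.finite_zpowers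
  refine mem_normalizer_fintype ?_
  rintro _ ⟨n, rfl⟩
  simpa only [conj_zpow, SetLike.mem_coe] using zpow_mem hgx n

theorem zpowers_coe_subgroupOf {K : Subgroup G} (x : K) :
    (zpowers (x : G)).subgroupOf K = zpowers x := by
  rw [← K.subtype_apply x, ← MonoidHom.map_zpowers, subgroupOf,
    comap_map_eq_self_of_injective K.subtype_injective]

theorem le_of_normal_of_centralizer_le {H N : Subgroup G} [IsSimpleGroup H] [H.Normal] [N.Normal]
    (hH : centralizer (H : Set G) ≤ H) (hN : N ≠ ⊥) : H ≤ N := by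
  rcases (inferInstance : (N.subgroupOf H).Normal).eq_bot_or_eq_top with hbot | htop
  · have hdisj : Disjoint N H := subgroupOf_eq_bot.mp hbot
    have hNC : N ≤ centralizer H :=
      commutator_eq_bot_iff_le_centralizer.mp (commutator_eq_bot_of_disjoint hdisj)
    exact absurd (hdisj.eq_bot_of_le (hNC.trans hH)) hN
  · exact subgroupOf_eq_top.mp htop

end Group

section Perm

open Equiv.Perm Subgroup

variable {α : Type*}

theorem mem_zpowers_of_commute_of_isCycle {c g : Equiv.Perm α} (hc : c.IsCycle)
    (hfix : (Function.fixedPoints c).Subsingleton) (hgc : Commute g c) : g ∈ zpowers c := by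
  obtain ⟨a, ha, hcycle⟩ := hc
  have hga : c (g a) ≠ g a := by
    rw [← mul_apply, ← hgc.eq, mul_apply]
    exact g.injective.ne ha
  obtain ⟨i, hi⟩ := hcycle hga
  refine ⟨i, Equiv.ext fun x ↦ ?_⟩
  by_cases hx : c x = x
  · have hgx : c (g x) = g x := by rw [← mul_apply, ← hgc.eq, mul_apply, hx]
    rw [zpow_apply_eq_self_of_apply_eq_self hx]
    exact hfix hx hgx
  · obtain ⟨j, rfl⟩ := hcycle hx
    calc (c ^ i) ((c ^ j) a) = (c ^ j) ((c ^ i) a) := zpow_apply_comm c i j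
      _ = (c ^ j) (g a) := by rw [hi]
      _ = g ((c ^ j) a) := (DFunLike.congr_fun (hgc.zpow_right j) a).symm

variable {G : Subgroup (Equiv.Perm α)} {c : G}

theorem centralizer_zpowers_le_of_isCycle (hc : (c : Equiv.Perm α).IsCycle)
    (hfix : (Function.fixedPoints (c : Equiv.Perm α)).Subsingleton) :
    centralizer (zpowers c : Set G) ≤ zpowers c := by
  intro g hg
  have hcomm : Commute c g := mem_centralizer_iff.mp hg c (mem_zpowers c)
  rw [← zpowers_coe_subgroupOf, mem_subgroupOf]
  exact mem_zpowers_of_commute_of_isCycle hc hfix (hcomm.symm.map G.subtype)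

theorem mem_of_normal_of_isCycle (hc : (c : Equiv.Perm α).IsCycle)
    (hfix : (Function.fixedPoints (c : Equiv.Perm α)).Subsingleton) (hp : (orderOf c).Prime)
    [(zpowers c).Normal] {N : Subgroup G} [N.Normal] (hN : N ≠ ⊥) : c ∈ N := by
  have : Fact (orderOf c).Prime := ⟨hp⟩
  have : IsSimpleGroup (zpowers c) := isSimpleGroup_of_prime_card (Nat.card_zpowers c)
  exact zpowers_le.mp
    (le_of_normal_of_centralizer_le (centralizer_zpowers_le_of_isCycle hc hfix) hN)

end Perm

theorem h6_isCycle : h6.IsCycle :=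
  Cycle.isCycle_formPerm _ (by decide)
    ((Cycle.nontrivial_coe_nodup_iff (by decide)).mpr (by decide))

theorem fixedPoints_h6_subsingleton : (Function.fixedPoints h6).Subsingleton := by
  have : ∀ x y, h6 x = x → h6 y = y → x = y := by decide
  exact fun x hx y hy ↦ this x y hx hy

theorem orderOf_h6G : orderOf h6G = 5 := by
  rw [h6G, Subgroup.orderOf_mk, h6_isCycle.orderOf]
  decide

theorem τ6_conj_h6 : τ6 * h6 * τ6⁻¹ = h6 ^ 2 := by
  decide

theorem G6_le_normalizer_zpowers_h6 :
    G6 ≤ Subgroup.normalizer (Subgroup.zpowers h6 : Set (Equiv.Perm (Fin 6))) := by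
  rw [G6, Subgroup.closure_le, Set.pair_subset_iff]
  constructor
  · refine mem_normalizer_zpowers_of_conj_mem (isOfFinOrder_of_finite h6) ?_
    exact τ6_conj_h6 ▸ Subgroup.npow_mem_zpowers h6 2
  · exact Subgroup.le_normalizer (Subgroup.mem_zpowers h6)

theorem zpowers_h6G_normal : (Subgroup.zpowers h6G).Normal := by
  rw [← zpowers_coe_subgroupOf]
  exact Subgroup.normal_subgroupOf_of_le_normalizer G6_le_normalizer_zpowers_h6

/-- The cyclic subgroup ⟨h⟩ is a normal subgroup of G of order 5, and every
nontrivial normal subgroup of G contains h; in particular ⟨h⟩ is the unique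
minimal normal subgroup of G. -/
theorem zpowers_h_unique_minimal_normal :
    (Subgroup.zpowers h6G).Normal ∧
    Nat.card (Subgroup.zpowers h6G) = 5 ∧
    ∀ N : Subgroup G6, N.Normal → N ≠ ⊥ → h6G ∈ N := by
  have hnormal : (Subgroup.zpowers h6G).Normal := zpowers_h6G_normal
  refine ⟨hnormal, (Nat.card_zpowers h6G).trans orderOf_h6G, fun N hN hne ↦ ?_⟩
  have hprime : (orderOf h6G).Prime := orderOf_h6G ▸ Nat.prime_five
  exact mem_of_normal_of_isCycle h6_isCycle fixedPoints_h6_subsingleton hprime hne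
end

section
/- Every finite-dimensional irreducible complex representation of G (i.e. every simple object of FDRep ℂ G) has dimension 1 or 4; moreover the abelianization of G has order 4 (so G has exactly four 1-dimensional representations). -/
open CategoryTheory

/-!
Let `G` be generated by `t` and an element `h` of prime order `p` with `t⁻¹ h t = h ^ r`, where `r`
has order `n > 1` modulo `p` and `t ^ n = 1`; in the theorem `p = 5`, `r = 3` and `n = 4`. On an
irreducible representation, `t` maps the `μ`-eigenspace of `h` into the `μ ^ r`-eigenspace. If `1`
is an eigenvalue of `h`, then `h` acts trivially and an eigenvector of `t` spans everything.
Otherwise the eigenvalue of an eigenvector `v` of `h` is a primitive `p`-th root of unity, so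
`v, t v, …, t ^ (n - 1) v` have distinct eigenvalues; as `t ^ n` is central, hence scalar, their
span is invariant, and they form a basis.

The commutator subgroup contains `h`, so the abelianization is generated by the image of `t`. As
the automorphism group of `⟨h⟩` is commutative, the commutator subgroup centralizes `⟨h⟩`, so it
contains `t ^ k` only if `n ∣ k`.
-/

theorem semiconjBy_pow_pow {M : Type*} [Monoid M] {t h : M} {r : ℕ}
    (hth : SemiconjBy t (h ^ r) h) (k : ℕ) : SemiconjBy (t ^ k) (h ^ r ^ k) h := by
  induction k with
  | zero => simp
  | succ k ih =>
    rw [pow_succ', pow_succ, pow_mul]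
    exact hth.mul_left (ih.pow_right r)

theorem injective_pow_pow_of_isPrimitiveRoot {M : Type*} [CommMonoid M] {μ : M} {p r n : ℕ}
    [NeZero p] (hμ : IsPrimitiveRoot μ p) (hr : IsPrimitiveRoot (r : ZMod p) n) :
    Function.Injective fun i : Fin n => μ ^ r ^ (i : ℕ) := by
  intro i j hij
  have hmod : r ^ (i : ℕ) ≡ r ^ (j : ℕ) [MOD p] := by
    rwa [hμ.eq_orderOf, ← (hμ.isOfFinOrder (NeZero.ne p)).pow_eq_pow_iff_modEq]
  refine Fin.ext (hr.pow_inj i.isLt j.isLt ?_)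
  simpa only [Nat.cast_pow] using (ZMod.natCast_eq_natCast_iff _ _ _).2 hmod

section Group

variable {G : Type*} [Group G] {t h : G} {p r n : ℕ}

theorem commute_pow_iff_natCast_pow_eq_one (hh : orderOf h = p) (hth : SemiconjBy t (h ^ r) h)
    (k : ℕ) : Commute (t ^ k) h ↔ (r : ZMod p) ^ k = 1 := by
  have hk : t ^ k * h ^ r ^ k = h * t ^ k := semiconjBy_pow_pow hth k
  calc Commute (t ^ k) h ↔ h ^ 1 = h ^ r ^ k := by
        rw [commute_iff_eq, ← hk, mul_right_inj, pow_one]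
    _ ↔ (r : ZMod p) ^ k = 1 := by
        rw [pow_eq_pow_iff_modEq, hh, ← ZMod.natCast_eq_natCast_iff, eq_comm]
        push_cast
        rfl

theorem mem_center_of_closure_eq_top {S : Set G} (hS : Subgroup.closure S = ⊤) {z : G}
    (hz : ∀ s ∈ S, Commute s z) : z ∈ Subgroup.center G := by
  rw [← Subgroup.centralizer_univ, ← Subgroup.coe_top, ← hS, Subgroup.centralizer_closure]
  exact Subgroup.mem_centralizer_iff.2 hz

theorem zpowers_normal_of_semiconjBy (hgen : Subgroup.closure {t, h} = ⊤) (hh : IsOfFinOrder h)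
    (hth : SemiconjBy t (h ^ r) h) : (Subgroup.zpowers h).Normal := by
  have : Finite (Subgroup.zpowers h : Set G) := finite_zpowers.2 hh
  rw [← Subgroup.normalizer_eq_top_iff, eq_top_iff, ← hgen, Subgroup.closure_le,
    Set.pair_subset_iff]
  constructor
  · rw [SetLike.mem_coe, ← inv_mem_iff]
    refine Subgroup.mem_normalizer_fintype ?_
    rintro _ ⟨m, rfl⟩
    have hconj : t⁻¹ * h * t⁻¹⁻¹ = h ^ r := by
      rw [inv_inv, mul_assoc, ← hth.eq, inv_mul_cancel_left]
    change t⁻¹ * h ^ m * t⁻¹⁻¹ ∈ Subgroup.zpowers h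
    rw [← conj_zpow, hconj]
    exact zpow_mem (Subgroup.npow_mem_zpowers h r) m
  · exact Subgroup.le_normalizer (Subgroup.mem_zpowers _)

theorem commutator_le_centralizer_of_isCyclic (N : Subgroup G) [N.Normal] [IsCyclic N] :
    commutator G ≤ Subgroup.centralizer N := by
  intro g hg
  let conj : G →* (ZMod (Nat.card N))ˣ :=
    (IsCyclic.mulAutMulEquiv N).toMonoidHom.comp MulAut.conjNormal
  have hconj : conj g = 1 := Abelianization.commutator_subset_ker conj hg
  have hg1 : MulAut.conjNormal (H := N) g = 1 :=
    (MulEquiv.map_eq_one_iff (IsCyclic.mulAutMulEquiv N)).1 hconj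
  rw [Subgroup.mem_centralizer_iff]
  intro x hx
  have hgx : g * x * g⁻¹ = x := congrArg (fun f : MulAut N => (f ⟨x, hx⟩ : G)) hg1
  exact (mul_inv_eq_iff_eq_mul.1 hgx).symm

theorem abelianization_of_eq_one [Fact p.Prime] (hh : orderOf h = p) (hth : SemiconjBy t (h ^ r) h)
    (hr : (r : ZMod p) ≠ 1) : Abelianization.of h = 1 := by
  have hpow : Abelianization.of h ^ r = Abelianization.of h ^ 1 := by
    have := hth.map Abelianization.of
    rw [SemiconjBy, mul_comm, mul_left_inj, map_pow] at this
    rwa [pow_one]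
  have hdvd : orderOf (Abelianization.of h) ∣ p := hh ▸ orderOf_map_dvd _ h
  rcases (Nat.dvd_prime Fact.out).1 hdvd with h1 | h1
  · exact orderOf_eq_one_iff.1 h1
  · rw [pow_eq_pow_iff_modEq, h1, ← ZMod.natCast_eq_natCast_iff, Nat.cast_one] at hpow
    exact absurd hpow hr

theorem zpowers_abelianization_of_eq_top (hgen : Subgroup.closure {t, h} = ⊤)
    (hh : Abelianization.of h = 1) : Subgroup.zpowers (Abelianization.of t) = ⊤ := by
  have hsurj : Function.Surjective (Abelianization.of (G := G)) := QuotientGroup.mk'_surjective _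
  rw [← Subgroup.map_top_of_surjective _ hsurj, ← hgen, MonoidHom.map_closure, Set.image_pair,
    hh, Set.pair_comm, Subgroup.closure_insert_one, Subgroup.zpowers_eq_closure]

theorem isPrimitiveRoot_abelianization_of (hgen : Subgroup.closure {t, h} = ⊤) [NeZero p]
    (hh : orderOf h = p) (hth : SemiconjBy t (h ^ r) h) (ht : t ^ n = 1)
    (hr : IsPrimitiveRoot (r : ZMod p) n) : IsPrimitiveRoot (Abelianization.of t) n where
  pow_eq_one := by rw [← map_pow, ht, map_one]
  dvd_of_pow_eq_one k hk := by
    have : (Subgroup.zpowers h).Normal :=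
      zpowers_normal_of_semiconjBy hgen (orderOf_pos_iff.1 (hh ▸ NeZero.pos p)) hth
    have hmem : t ^ k ∈ commutator G := by
      rwa [← Abelianization.ker_of, MonoidHom.mem_ker, map_pow]
    have hcomm : Commute (t ^ k) h :=
      (Subgroup.mem_centralizer_iff.1 (commutator_le_centralizer_of_isCyclic _ hmem) h
        (Subgroup.mem_zpowers h)).symm
    exact hr.dvd_of_pow_eq_one k ((commute_pow_iff_natCast_pow_eq_one hh hth k).1 hcomm)

theorem card_abelianization_eq [Fact p.Prime] (hgen : Subgroup.closure {t, h} = ⊤)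
    (hh : orderOf h = p) (hth : SemiconjBy t (h ^ r) h) (ht : t ^ n = 1) (hn : n ≠ 1)
    (hr : IsPrimitiveRoot (r : ZMod p) n) : Nat.card (Abelianization G) = n := by
  have hr1 : (r : ZMod p) ≠ 1 := fun h1 => hn (hr.unique (h1 ▸ IsPrimitiveRoot.one))
  rw [(isPrimitiveRoot_abelianization_of hgen hh hth ht hr).eq_orderOf, ← Nat.card_zpowers,
    zpowers_abelianization_of_eq_top hgen (abelianization_of_eq_one hh hth hr1), Subgroup.card_top]

end Group

section Eigenvector

open Module.End (HasEigenvector eigenspace)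

theorem span_range_pow_apply_mem_invtSubmodule {R M : Type*} [Semiring R] [AddCommMonoid M]
    [Module R M] {T : Module.End R M} {v : M} {c : R} {n : ℕ} (hT : (T ^ n) v = c • v) :
    Submodule.span R (Set.range fun i : Fin n => (T ^ (i : ℕ)) v) ∈ T.invtSubmodule := by
  have hmem (i : ℕ) (hi : i < n) :
      (T ^ i) v ∈ Submodule.span R (Set.range fun i : Fin n => (T ^ (i : ℕ)) v) :=
    Submodule.subset_span ⟨⟨i, hi⟩, rfl⟩
  refine Submodule.span_le.2 ?_
  rintro _ ⟨i, rfl⟩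
  rw [SetLike.mem_coe, Submodule.mem_comap, ← Module.End.mul_apply, ← pow_succ']
  rcases Nat.lt_or_eq_of_le (Nat.succ_le_of_lt i.isLt) with hi | hi
  · exact hmem _ hi
  · rw [← Nat.succ_eq_add_one, hi, hT]
    exact Submodule.smul_mem _ c (hmem 0 i.pos)

variable {R M : Type*} [CommRing R] [AddCommGroup M] [Module R M] {T H : Module.End R M} {r : ℕ}
  {μ : R} {v : M}

theorem apply_mem_eigenspace_pow (hTH : SemiconjBy T (H ^ r) H) (hv : v ∈ eigenspace H μ) :
    T v ∈ eigenspace H (μ ^ r) := by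
  have hpow : (H ^ r) v = μ ^ r • v := by
    rcases eq_or_ne v 0 with rfl | hv0
    · simp
    · exact HasEigenvector.pow_apply ⟨hv, hv0⟩ r
  rw [Module.End.mem_eigenspace_iff]
  calc H (T v) = (T * H ^ r) v := (LinearMap.congr_fun hTH.eq v).symm
    _ = μ ^ r • T v := by rw [Module.End.mul_apply, hpow, map_smul]

theorem hasEigenvector_pow_apply (hTH : SemiconjBy T (H ^ r) H) (hT : Function.Injective T)
    (hv : HasEigenvector H μ v) (i : ℕ) : HasEigenvector H (μ ^ r ^ i) ((T ^ i) v) := by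
  refine ⟨apply_mem_eigenspace_pow (semiconjBy_pow_pow hTH i) hv.1, ?_⟩
  have hTi : Function.Injective (T ^ i) := by
    rw [Module.End.coe_pow]
    exact hT.iterate i
  exact (map_ne_zero_iff _ hTi).2 hv.2

end Eigenvector

section Irreducible

variable {k G V : Type*} [Field k] [Monoid G] [AddCommGroup V] [Module k V]

theorem nontrivial_of_isIrreducible (ρ : Representation k G V) [ρ.IsIrreducible] : Nontrivial V :=
  IsSimpleModule.nontrivial (MonoidAlgebra k G) ρ.asModule

theorem exists_forall_apply_eq_smul_of_mem_center [IsAlgClosed k] [FiniteDimensional k V]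
    {ρ : Representation k G V} [ρ.IsIrreducible] {z : G} (hz : z ∈ Submonoid.center G) :
    ∃ c : k, ∀ v, ρ z v = c • v := by
  let f := Representation.IntertwiningMap.centralMul ρ z hz
  obtain ⟨c, hc⟩ :=
    Representation.IsIrreducible.algebraMap_intertwiningMap_bijective_of_isAlgClosed.2 f
  exact ⟨c, fun v => (congrArg (fun φ => φ v) hc).symm⟩

theorem isIrreducible_ρ_of_simple (V : FDRep k G) [Simple V] :
    Representation.IsIrreducible V.ρ where
  exists_pair_ne := by
    refine ⟨⊥, ⊤, fun h => id_nonzero V ?_⟩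
    ext v
    exact (h ▸ Submodule.mem_top : v ∈ (⊥ : Subrepresentation V.ρ).toSubmodule)
  eq_bot_or_eq_top W := by
    let ι : FDRep.of W.toRepresentation ⟶ V :=
      { hom := InducedCategory.homMk (ModuleCat.ofHom W.toSubmodule.subtype)
        comm := fun _ => rfl }
    have : Mono ι := ConcreteCategory.mono_of_injective ι Subtype.val_injective
    by_cases hι : ι = 0
    · refine .inl (eq_bot_iff.2 fun w hw => ?_)
      exact congrArg (fun f : FDRep.of W.toRepresentation ⟶ V => f.hom.hom.hom ⟨w, hw⟩) hι
    · have := isIso_of_mono_of_nonzero hι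
      refine .inr (eq_top_iff.2 fun v _ => ?_)
      have hv : ι.hom.hom.hom ((inv ι).hom.hom.hom v) = v :=
        congrArg (fun f : V ⟶ V => f.hom.hom.hom v) (IsIso.inv_hom_id ι)
      exact hv ▸ Subtype.property ((inv ι).hom.hom.hom v)

end Irreducible

section Representation

open Module.End (HasEigenvalue HasEigenvector eigenspace invtSubmodule)

variable {k G V : Type*} [Field k] [Group G] [AddCommGroup V] [Module k V]
  {ρ : Representation k G V} {t h : G} {p r n : ℕ} {μ : k}

theorem mem_invtSubmodule_of_closure_eq_top [FiniteDimensional k V] {S : Set G}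
    (hS : Subgroup.closure S = ⊤) {W : Submodule k V}
    (hW : ∀ s ∈ S, W ∈ invtSubmodule (ρ s)) : W ∈ ρ.invtSubmodule := by
  rw [Representation.mem_invtSubmodule]
  intro g
  have hg : g ∈ Subgroup.closure S := hS ▸ Subgroup.mem_top g
  induction hg using Subgroup.closure_induction with
  | mem s hs => exact hW s hs
  | one => simp
  | mul a b _ _ ha hb =>
    intro w hw
    rw [Submodule.mem_comap, map_mul]
    exact ha (hb hw)
  | inv a _ ha =>
    have hinj : Function.Injective (ρ a) := (ρ.apply_bijective a).injective
    have hmap : W.map (ρ a) = W :=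
      Submodule.eq_of_le_of_finrank_eq (Submodule.map_le_iff_le_comap.2 ha)
        (Submodule.equivMapOfInjective (ρ a) hinj W).finrank_eq.symm
    intro w hw
    obtain ⟨u, hu, rfl⟩ := hmap.symm ▸ hw
    simpa using hu

theorem eq_top_of_mem_invtSubmodule [FiniteDimensional k V] [ρ.IsIrreducible]
    (hgen : Subgroup.closure {t, h} = ⊤) {W : Submodule k V}
    (ht : W ∈ invtSubmodule (ρ t)) (hh : W ∈ invtSubmodule (ρ h)) (hne : W ≠ ⊥) : W = ⊤ := by
  have hW : ∀ s ∈ ({t, h} : Set G), W ∈ invtSubmodule (ρ s) := by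
    rintro s (rfl | rfl) <;> assumption
  let σ : Subrepresentation ρ :=
    ⟨W, ρ.mem_invtSubmodule.1 (mem_invtSubmodule_of_closure_eq_top hgen hW)⟩
  rcases eq_bot_or_eq_top σ with hσ | hσ
  · exact absurd (congrArg Subrepresentation.toSubmodule hσ) hne
  · exact congrArg Subrepresentation.toSubmodule hσ

theorem finrank_eq_one_of_hasEigenvalue_one [IsAlgClosed k] [FiniteDimensional k V]
    [ρ.IsIrreducible] (hgen : Subgroup.closure {t, h} = ⊤) (hth : SemiconjBy t (h ^ r) h)
    (h1 : HasEigenvalue (ρ h) 1) : Module.finrank k V = 1 := by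
  have := nontrivial_of_isIrreducible ρ
  have hfixed : eigenspace (ρ h) 1 = ⊤ := by
    refine eq_top_of_mem_invtSubmodule (ρ := ρ) hgen (fun v hv => ?_) (fun v hv => ?_) h1
    · rw [Submodule.mem_comap, ← one_pow r]
      exact apply_mem_eigenspace_pow (by simpa only [map_pow] using hth.map ρ) hv
    · rw [Submodule.mem_comap, Module.End.mem_eigenspace_iff.1 hv]
      exact Submodule.smul_mem _ _ hv
  obtain ⟨c, hc⟩ := Module.End.exists_eigenvalue (ρ t)
  obtain ⟨u, hu⟩ := hc.exists_hasEigenvector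
  have hspan : k ∙ u = ⊤ := by
    refine eq_top_of_mem_invtSubmodule (ρ := ρ) hgen ?_ ?_ (by simpa using hu.2) <;>
      refine (Submodule.span_singleton_le_iff_mem _ _).2 ?_
    · rw [Submodule.mem_comap, hu.apply_eq_smul]
      exact Submodule.smul_mem _ _ (Submodule.mem_span_singleton_self u)
    · have hu1 : u ∈ eigenspace (ρ h) 1 := hfixed ▸ Submodule.mem_top
      rw [Submodule.mem_comap, Module.End.mem_eigenspace_iff.1 hu1]
      exact Submodule.smul_mem _ _ (Submodule.mem_span_singleton_self u)
  rw [← finrank_top, ← hspan, finrank_span_singleton hu.2]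

theorem finrank_eq_of_isPrimitiveRoot [IsAlgClosed k] [FiniteDimensional k V]
    [ρ.IsIrreducible] (hgen : Subgroup.closure {t, h} = ⊤) (hh : orderOf h = p)
    (hth : SemiconjBy t (h ^ r) h) [NeZero p] [NeZero n] (hr : IsPrimitiveRoot (r : ZMod p) n)
    (hμ : IsPrimitiveRoot μ p) (hev : HasEigenvalue (ρ h) μ) : Module.finrank k V = n := by
  obtain ⟨v, hv⟩ := hev.exists_hasEigenvector
  have hcentral : t ^ n ∈ Subgroup.center G := by
    refine mem_center_of_closure_eq_top hgen ?_
    rintro _ (rfl | rfl)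
    · exact Commute.self_pow _ n
    · exact ((commute_pow_iff_natCast_pow_eq_one hh hth n).2 hr.pow_eq_one).symm
  obtain ⟨c, hc⟩ := exists_forall_apply_eq_smul_of_mem_center (ρ := ρ) hcentral
  let w : Fin n → V := fun i => (ρ t ^ (i : ℕ)) v
  have hw (i : Fin n) : HasEigenvector (ρ h) (μ ^ r ^ (i : ℕ)) (w i) :=
    hasEigenvector_pow_apply (by simpa only [map_pow] using hth.map ρ)
      (ρ.apply_bijective t).injective hv i
  have hli : LinearIndependent k w :=
    Module.End.eigenvectors_linearIndependent' _ _ (injective_pow_pow_of_isPrimitiveRoot hμ hr) w hw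
  have hspan : Submodule.span k (Set.range w) = ⊤ := by
    refine eq_top_of_mem_invtSubmodule (ρ := ρ) hgen ?_ ?_ ?_
    · exact span_range_pow_apply_mem_invtSubmodule (by rw [← map_pow, hc])
    · refine Submodule.span_le.2 ?_
      rintro _ ⟨i, rfl⟩
      rw [SetLike.mem_coe, Submodule.mem_comap, (hw i).apply_eq_smul]
      exact Submodule.smul_mem _ _ (Submodule.subset_span (Set.mem_range_self i))
    · rw [Submodule.ne_bot_iff]
      exact ⟨w 0, Submodule.subset_span (Set.mem_range_self 0), (hw 0).2⟩
  rw [Module.finrank_eq_card_basis (Module.Basis.mk hli hspan.ge), Fintype.card_fin]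

theorem finrank_eq_one_or_eq [IsAlgClosed k] [FiniteDimensional k V] [Fact p.Prime]
    [ρ.IsIrreducible] (hgen : Subgroup.closure {t, h} = ⊤) (hh : orderOf h = p)
    (hth : SemiconjBy t (h ^ r) h) [NeZero n] (hr : IsPrimitiveRoot (r : ZMod p) n) :
    Module.finrank k V = 1 ∨ Module.finrank k V = n := by
  have := nontrivial_of_isIrreducible ρ
  obtain ⟨μ, hμ⟩ := Module.End.exists_eigenvalue (ρ h)
  rcases eq_or_ne μ 1 with rfl | hμ1
  · exact .inl (finrank_eq_one_of_hasEigenvalue_one hgen hth hμ)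
  · have hμp : μ ^ p = 1 := by
      obtain ⟨v, hv⟩ := hμ.exists_hasEigenvector
      have hsmul : μ ^ p • v = (1 : k) • v := by
        rw [← hv.pow_apply, ← map_pow, ← hh, pow_orderOf_eq_one, map_one, Module.End.one_apply,
          one_smul]
      exact smul_left_injective k hv.2 hsmul
    have hprim : IsPrimitiveRoot μ p := orderOf_eq_prime hμp hμ1 ▸ IsPrimitiveRoot.orderOf μ
    exact .inr (finrank_eq_of_isPrimitiveRoot hgen hh hth hr hprim hμ)

end Representation

/-- The generator `τ6` as an element of `G6`. -/
def τG : G6 := ⟨τ6, Subgroup.subset_closure (by simp)⟩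

/-- The generator `h6` as an element of `G6`. -/
def hG : G6 := ⟨h6, Subgroup.subset_closure (by simp)⟩

theorem closure_τG_hG : Subgroup.closure {τG, hG} = ⊤ := by
  have : ({τG, hG} : Set G6) = Subtype.val ⁻¹' {τ6, h6} := by
    ext x
    simp [τG, hG, Subtype.ext_iff]
  rw [this]
  exact Subgroup.closure_closure_coe_preimage

theorem orderOf_hG : orderOf hG = 5 := by
  have : Fact (Nat.Prime 5) := ⟨Nat.prime_five⟩
  rw [← Subgroup.orderOf_coe]
  exact orderOf_eq_prime (by decide +kernel) (by decide)

theorem semiconjBy_τG_hG : SemiconjBy τG (hG ^ 3) hG :=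
  Subtype.ext (by decide : τ6 * h6 ^ 3 = h6 * τ6)

theorem τG_pow_four : τG ^ 4 = 1 := Subtype.ext (by decide : τ6 ^ 4 = 1)

theorem isPrimitiveRoot_three_zmod_five : IsPrimitiveRoot ((3 : ℕ) : ZMod 5) 4 := by
  refine .mk_of_lt _ (by decide) (by decide) fun l hl0 hl4 => ?_
  interval_cases l <;> decide

theorem irreps_of_G_have_dim_one_or_four_general {k : Type*} [Field k] [IsAlgClosed k]
    {G : Type*} [Group G] {t h : G} {p r n : ℕ} [Fact p.Prime]
    (hgen : Subgroup.closure {t, h} = ⊤) (hh : orderOf h = p) (hth : SemiconjBy t (h ^ r) h)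
    (hr : IsPrimitiveRoot (r : ZMod p) n) (hn : 1 < n) (ht : t ^ n = 1) :
    (∀ V : FDRep k G, Simple V → Module.finrank k V = 1 ∨ Module.finrank k V = n) ∧
      Nat.card (Abelianization G) = n := by
  have : NeZero n := ⟨by lia⟩
  refine ⟨fun V _ => ?_, card_abelianization_eq hgen hh hth ht hn.ne' hr⟩
  have := isIrreducible_ρ_of_simple V
  exact finrank_eq_one_or_eq (ρ := V.ρ) hgen hh hth hr

/-- Every irreducible finite-dimensional complex representation of G has
dimension 1 or 4, and the abelianization of G has order 4 (so that G has
exactly four 1-dimensional representations). -/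
theorem irreps_of_G_have_dim_one_or_four :
    (∀ V : FDRep ℂ G6, Simple V →
      Module.finrank ℂ V = 1 ∨ Module.finrank ℂ V = 4) ∧
    Nat.card (Abelianization G6) = 4 := by
  have : Fact (Nat.Prime 5) := ⟨Nat.prime_five⟩
  exact irreps_of_G_have_dim_one_or_four_general closure_τG_hG orderOf_hG semiconjBy_τG_hG
    isPrimitiveRoot_three_zmod_five (by norm_num) τG_pow_four
end

section
/- There is no injective group homomorphism from G into PGL(2, ℂ), i.e. into the quotient of GL(2, ℂ) by its center. -/
/-- PGL(2, ℂ), the quotient of GL(2, ℂ) by its center. -/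
abbrev PGL2C := GL (Fin 2) ℂ ⧸ Subgroup.center (GL (Fin 2) ℂ)

/-!
The 5-cycle `h` is conjugate to `h ^ 2` in `G`. For `g` in `PGL(2, K)` represented by a matrix with
trace `t` and determinant `d`, the number `t ^ 2 / d` is a conjugacy invariant, and squaring `g`
turns its value `x` into `(x - 2) ^ 2`. So if `g` is conjugate to `g ^ 2`, then
`x ^ 2 - 5 * x + 4 = 0`. Suppose moreover that `g ^ 5 = 1`. If `x = 1`, then `g ^ 3 = 1`, so
`g = 1`. If `x = 4`, then in characteristic two `g ^ 2 = 1`, so again `g = 1`, and otherwise `g` is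
the class of a scalar plus a nilpotent matrix; outside characteristic five the nilpotent part
vanishes because the representing matrix is a root of a separable polynomial `X ^ 5 - c`.
-/

open Matrix
open scoped MatrixGroups

section Separability

open Polynomial

variable {K A : Type*} [Field K] [Ring A] [Algebra K A]

theorem minpoly_separable_of_pow_eq_algebraMap {a : A} {c : K} {n : ℕ} (hc : c ≠ 0)
    (hn : (n : K) ≠ 0) (hpow : a ^ n = algebraMap K A c) : (minpoly K a).Separable :=
  (separable_X_pow_sub_C c hn hc).of_dvd <| minpoly.dvd K a <| by simp [hpow]

theorem eq_algebraMap_of_isNilpotent_sub_of_pow_eq_algebraMap {a : A} {s c : K} {n : ℕ}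
    (hs : IsNilpotent (a - algebraMap K A s)) (hc : c ≠ 0) (hn : (n : K) ≠ 0)
    (hpow : a ^ n = algebraMap K A c) : a = algebraMap K A s := by
  obtain ⟨k, hk⟩ := hs
  have hdvd : minpoly K a ∣ (X - C s) ^ (k + 1) :=
    minpoly.dvd K a <| by simp [pow_succ, hk]
  have hsqfree := (minpoly_separable_of_pow_eq_algebraMap hc hn hpow).squarefree
  have hdvd' : minpoly K a ∣ X - C s := (hsqfree.dvd_pow_iff_dvd k.succ_ne_zero).mp hdvd
  have hroot : aeval a (X - C s) = 0 := (minpoly.dvd_iff).mp hdvd'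
  simpa [sub_eq_zero] using hroot

end Separability

section CommRing

variable {n R : Type*} [Fintype n] [DecidableEq n] [CommRing R]

theorem projGenLinGroup_mk_eq_one_iff {A : GL n R} :
    ProjGenLinGroup.mk A = 1 ↔ ∃ u : R, A.val = algebraMap R _ u := by
  rw [ProjGenLinGroup.mk_eq_one, GeneralLinearGroup.mem_center_iff_val_mem_range_scalar]
  exact exists_congr fun _ ↦ eq_comm

theorem trace_pow_card_mul_det_eq_of_isConj {A B : GL n R}
    (hAB : IsConj (ProjGenLinGroup.mk A) (ProjGenLinGroup.mk B)) :
    A.val.trace ^ Fintype.card n * B.val.det = B.val.trace ^ Fintype.card n * A.val.det := by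
  obtain ⟨g, hg⟩ := isConj_iff.mp hAB
  obtain ⟨T, rfl⟩ := ProjGenLinGroup.mk_surjective g
  rw [← map_inv, ← map_mul, ← map_mul, ProjGenLinGroup.mk_eq_mk_iff] at hg
  obtain ⟨u, rfl⟩ := hg
  have hval : (T * A * T⁻¹ * .scalar n u).val = u.val • (T.val * A.val * T⁻¹.val) := by
    simp [← smul_eq_mul_diagonal]
  rw [hval, trace_smul, det_smul, trace_units_conj, det_units_conj, smul_eq_mul]
  ring

theorem trace_sq_fin_two (M : Matrix (Fin 2) (Fin 2) R) :
    (M ^ 2).trace = M.trace ^ 2 - 2 * M.det := by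
  simp only [sq, trace_fin_two, det_fin_two, mul_apply, Fin.sum_univ_two]
  ring

theorem sq_eq_trace_smul_sub_fin_two (M : Matrix (Fin 2) (Fin 2) R) :
    M ^ 2 = M.trace • M - algebraMap R _ M.det := by
  nontriviality R
  have hCH := M.aeval_self_charpoly
  simp only [charpoly_fin_two, map_add, map_sub, map_mul, map_pow, Polynomial.aeval_X,
    Polynomial.aeval_C, ← Algebra.smul_def] at hCH
  rwa [sub_add, sub_eq_zero] at hCH

theorem projGenLinGroup_mk_sq_eq_one_of_trace_eq_zero {A : GL (Fin 2) R}
    (hA : A.val.trace = 0) : ProjGenLinGroup.mk A ^ 2 = 1 := by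
  rw [← map_pow, projGenLinGroup_mk_eq_one_iff]
  exact ⟨-A.val.det, by simp [sq_eq_trace_smul_sub_fin_two, hA]⟩

theorem projGenLinGroup_mk_pow_three_eq_one_of_trace_sq_eq_det {A : GL (Fin 2) R}
    (hA : A.val.trace ^ 2 = A.val.det) : ProjGenLinGroup.mk A ^ 3 = 1 := by
  rw [← map_pow, projGenLinGroup_mk_eq_one_iff]
  refine ⟨-(A.val.trace * A.val.det), ?_⟩
  have hsq := sq_eq_trace_smul_sub_fin_two A.val
  calc (A ^ 3).val = A.val ^ 2 * A.val := by simp [pow_succ]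
    _ = A.val.trace • A.val ^ 2 - A.val.det • A.val := by
      rw [hsq, sub_mul, smul_mul_assoc, ← sq, ← Algebra.smul_def, ← hsq]
    _ = algebraMap R _ (-(A.val.trace * A.val.det)) := by
      rw [hsq, smul_sub, smul_smul, ← sq, hA, sub_sub_cancel_left, map_neg, map_mul,
        ← Algebra.smul_def]

end CommRing

section Field

variable {K : Type*} [Field K]

theorem trace_sq_eq_det_or_discr_eq_zero_of_isConj_sq {A : GL (Fin 2) K}
    (hA : IsConj (ProjGenLinGroup.mk A) (ProjGenLinGroup.mk A ^ 2)) :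
    A.val.trace ^ 2 = A.val.det ∨ A.val.discr = 0 := by
  rw [← map_pow] at hA
  have hinv := trace_pow_card_mul_det_eq_of_isConj hA
  rw [Units.val_pow_eq_pow_val, trace_sq_fin_two, det_pow, Fintype.card_fin] at hinv
  have hprod : A.val.det * ((A.val.trace ^ 2 - A.val.det) * A.val.discr) = 0 := by
    rw [discr_fin_two]
    linear_combination -hinv
  have hfactors := (mul_eq_zero.mp hprod).resolve_left A.det_ne_zero
  simpa [sub_eq_zero] using hfactors

theorem eq_algebraMap_of_discr_eq_zero_of_pow_eq_algebraMap [NeZero (2 : K)]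
    {M : Matrix (Fin 2) (Fin 2) K} {c : K} {n : ℕ} (hM : M.discr = 0) (hc : c ≠ 0)
    (hn : (n : K) ≠ 0) (hpow : M ^ n = algebraMap K _ c) :
    M = algebraMap K _ (M.trace / 2) := by
  have hsq : (M - algebraMap K _ (M.trace / 2)) ^ 2 = 0 := by
    have hdiscr := sub_scalar_sq_eq_discr (m := M)
    rwa [hM, zero_div, map_zero] at hdiscr
  exact eq_algebraMap_of_isNilpotent_sub_of_pow_eq_algebraMap ⟨2, hsq⟩ hc hn hpow

theorem projGenLinGroup_mk_eq_one_of_discr_eq_zero_of_pow_eq_one {A : GL (Fin 2) K} {n : ℕ}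
    (hA : A.val.discr = 0) (hn : (n : K) ≠ 0) (hpow : ProjGenLinGroup.mk A ^ n = 1) :
    ProjGenLinGroup.mk A = 1 := by
  rcases eq_or_ne (2 : K) 0 with htwo | htwo
  · have htrace : A.val.trace = 0 := by
      rw [discr_fin_two] at hA
      exact pow_eq_zero_iff two_ne_zero |>.mp (by linear_combination hA + 2 * A.val.det * htwo)
    have hodd : Nat.Coprime 2 n := by
      rw [Nat.prime_two.coprime_iff_not_dvd]
      rintro ⟨k, rfl⟩
      simp [htwo] at hn
    exact (pow_eq_one_iff_of_coprime hodd).mp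
      ⟨projGenLinGroup_mk_sq_eq_one_of_trace_eq_zero htrace, hpow⟩
  · have : NeZero (2 : K) := ⟨htwo⟩
    rw [← map_pow, projGenLinGroup_mk_eq_one_iff] at hpow
    obtain ⟨c, hc⟩ := hpow
    have hc₀ : c ≠ 0 := by
      rintro rfl
      exact (A ^ n).ne_zero (by simpa using hc)
    exact projGenLinGroup_mk_eq_one_iff.mpr
      ⟨_, eq_algebraMap_of_discr_eq_zero_of_pow_eq_algebraMap hA hc₀ hn (by simpa using hc)⟩

theorem projGenLinGroup_eq_one_of_isConj_sq_of_pow_eq_one {g : PGL(2, K)} {n : ℕ}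
    (hconj : IsConj g (g ^ 2)) (hthree : Nat.Coprime 3 n) (hn : (n : K) ≠ 0) (hpow : g ^ n = 1) :
    g = 1 := by
  obtain ⟨A, rfl⟩ := ProjGenLinGroup.mk_surjective g
  rcases trace_sq_eq_det_or_discr_eq_zero_of_isConj_sq hconj with htrace | hdiscr
  · exact (pow_eq_one_iff_of_coprime hthree).mp
      ⟨projGenLinGroup_mk_pow_three_eq_one_of_trace_sq_eq_det htrace, hpow⟩
  · exact projGenLinGroup_mk_eq_one_of_discr_eq_zero_of_pow_eq_one hdiscr hn hpow

end Field

theorem orderOf_h6 : orderOf h6 = 5 := by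
  have hcycle : h6.IsCycle := Cycle.isCycle_formPerm _ _ (by simp)
  rw [hcycle.orderOf]
  decide

theorem τ6_mul_h6 : τ6 * h6 = h6 ^ 2 * τ6 := by
  decide

theorem exists_G6_orderOf_eq_five_and_isConj_sq :
    ∃ h : G6, orderOf h = 5 ∧ IsConj h (h ^ 2) := by
  let τ : G6 := ⟨τ6, Subgroup.subset_closure (by simp)⟩
  let h : G6 := ⟨h6, Subgroup.subset_closure (by simp)⟩
  have hmul : τ * h = h ^ 2 * τ := Subtype.ext τ6_mul_h6
  exact ⟨h, (Subgroup.orderOf_mk h6 _).trans orderOf_h6,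
    isConj_iff.mpr ⟨τ, mul_inv_eq_of_eq_mul hmul⟩⟩

theorem G_not_subgroup_of_PGL2_general {K : Type*} [Field K] (hfive : (5 : K) ≠ 0)
    (φ : G6 →* PGL(2, K)) : ¬ Function.Injective φ := by
  intro hφ
  obtain ⟨h, horder, hconj⟩ := exists_G6_orderOf_eq_five_and_isConj_sq
  have hconj' : IsConj (φ h) (φ h ^ 2) := map_pow φ h 2 ▸ φ.map_isConj hconj
  have horder' : orderOf (φ h) = 5 := (orderOf_injective φ hφ h).trans horder
  have hone : φ h = 1 := projGenLinGroup_eq_one_of_isConj_sq_of_pow_eq_one hconj'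
    (by decide : Nat.Coprime 3 5) (mod_cast hfive) (horder' ▸ pow_orderOf_eq_one (φ h))
  simp [hone] at horder'

/-- G does not embed into PGL(2, ℂ). -/
theorem G_not_subgroup_of_PGL2 :
    ∀ φ : G6 →* PGL2C, ¬ Function.Injective φ :=
  G_not_subgroup_of_PGL2_general (K := ℂ) (by norm_num)
end

section
/- The orbit {σ(Q₁) : σ ∈ G} of the quadric cone Q₁ under G, as a family of subsets of ℂ⁶, has exactly 10 distinct elements; equivalently, the stabilizer of Q₁ in G has order 2 and is generated by the involution h∘τ². -/
/-!
The letters `2, 0, 4, 3, 1` are labelled by `0, 1, 2, 3, 4 ∈ ℤ/5`. Then `h` becomes `x ↦ x + 1`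
and `τ` becomes `x ↦ 2x`, and since `2` is a primitive root modulo `5`, `G` is the full affine
group of `ℤ/5`, of order `20`.

The second idea is that a permutation `σ` fixing `5` and preserving `Q₁` preserves `{0, 2}`. For a
primitive cube root of unity `ζ`, the point `p = (0, 1, 0, ζ, ζ², 0)` lies on `Q₁`, so
`ℓ₁(σ⁻¹ · p) = p (σ 0) + p (σ 2)` vanishes; the cubes of the two summands are `0` or `1`, so both
summands vanish and `σ 0, σ 2 ∉ {1, 3, 4}`. The only affine maps of `ℤ/5` preserving `{0, 1}` are
the identity and `x ↦ 1 - x`, which is `h ∘ τ²` and does preserve `Q₁`. Hence the stabilizer has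
order `2` and the orbit has `20 / 2` elements.
-/

open Equiv Equiv.Perm

open scoped Pointwise

lemma ncard_orbit_mul_ncard_stabilizer {Γ X : Type*} [Group Γ] [MulAction Γ X]
    (H : Subgroup Γ) (x : X) :
    (MulAction.orbit H x).ncard * {g : Γ | g ∈ H ∧ g • x = x}.ncard = Nat.card H := by
  have hstab : {g : Γ | g ∈ H ∧ g • x = x} =
      Subtype.val '' (MulAction.stabilizer H x : Set H) := by
    ext g
    simp [Subgroup.smul_def, and_comm]
  rw [hstab, Set.ncard_image_of_injective _ Subtype.val_injective, ← MulAction.index_stabilizer]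
  exact (MulAction.stabilizer H x).index_mul_card

lemma smul_set_eq_of_mul_self_eq_one {Γ X : Type*} [Group Γ] [MulAction Γ X] {g : Γ}
    (hg : g * g = 1) {s : Set X} (hs : ∀ x ∈ s, g • x ∈ s) : g • s = s := by
  have hsub : g • s ⊆ s := Set.smul_set_subset_iff.2 hs
  refine hsub.antisymm ?_
  calc s = g • g • s := by rw [smul_smul, hg, one_smul]
    _ ⊆ g • s := Set.smul_set_mono hsub

section AffineGroup

variable {R : Type*} [Ring R]

/-- The affine permutation `x ↦ a * x + b` of a ring; `a` is a unit so that it is invertible. -/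
def affinePerm (a : Rˣ) (b : R) : Perm R := Equiv.addRight b * MulAction.toPerm a

lemma affinePerm_apply (a : Rˣ) (b x : R) : affinePerm a b x = a * x + b := rfl

lemma affinePerm_one_zero : affinePerm (1 : Rˣ) 0 = 1 := by
  ext x
  simp [affinePerm_apply]

lemma affinePerm_mul (a c : Rˣ) (b d : R) :
    affinePerm a b * affinePerm c d = affinePerm (a * c) (a * d + b) := by
  ext x
  simp [affinePerm_apply, mul_add, mul_assoc, add_assoc]

lemma affinePerm_one_zsmul (k : ℤ) (b : R) : affinePerm 1 (k • b) = affinePerm 1 b ^ k :=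
  map_zpow (MonoidHom.mk' (fun c : Multiplicative R ↦ affinePerm 1 c.toAdd) fun c d ↦ by
    simp [affinePerm_mul, add_comm]) (Multiplicative.ofAdd b) k

lemma affinePerm_zpow_zero (a : Rˣ) (k : ℤ) : affinePerm (a ^ k) 0 = affinePerm a 0 ^ k :=
  map_zpow (MonoidHom.mk' (fun c : Rˣ ↦ affinePerm c 0) fun c d ↦ by
    simp [affinePerm_mul]) a k

lemma affinePerm_injective : Function.Injective fun p : Rˣ × R ↦ affinePerm p.1 p.2 := by
  rintro ⟨a, b⟩ ⟨c, d⟩ h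
  have hb : b = d := by simpa [affinePerm_apply] using congr($h 0)
  have ha : a = c := Units.ext <| by simpa [affinePerm_apply, hb] using congr($h 1)
  rw [ha, hb]

variable (R) in
/-- The general affine group `GA(1, R)`, as a group of permutations of `R`. -/
def affineGroup : Subgroup (Perm R) where
  carrier := Set.range fun p : Rˣ × R ↦ affinePerm p.1 p.2
  one_mem' := ⟨(1, 0), affinePerm_one_zero⟩
  mul_mem' := by
    rintro _ _ ⟨⟨a, b⟩, rfl⟩ ⟨⟨c, d⟩, rfl⟩
    exact ⟨(a * c, a * d + b), (affinePerm_mul a c b d).symm⟩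
  inv_mem' := by
    rintro _ ⟨⟨a, b⟩, rfl⟩
    refine ⟨(a⁻¹, -(↑a⁻¹ * b)), eq_inv_of_mul_eq_one_left ?_⟩
    simp [affinePerm_mul, affinePerm_one_zero]

lemma mem_affineGroup {e : Perm R} : e ∈ affineGroup R ↔ ∃ a b, affinePerm a b = e :=
  Prod.exists

variable (R) in
lemma card_affineGroup : Nat.card (affineGroup R) = Nat.card Rˣ * Nat.card R :=
  (Nat.card_range_of_injective affinePerm_injective).trans (Nat.card_prod _ _)

lemma closure_affinePerm_eq_affineGroup {n : ℕ} {g : (ZMod n)ˣ}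
    (hg : ∀ u, u ∈ Subgroup.zpowers g) :
    Subgroup.closure {affinePerm g 0, affinePerm 1 1} = affineGroup (ZMod n) := by
  refine le_antisymm ?_ fun e he ↦ ?_
  · rw [Subgroup.closure_le]
    rintro _ (rfl | rfl) <;> exact mem_affineGroup.2 ⟨_, _, rfl⟩
  · obtain ⟨a, b, rfl⟩ := mem_affineGroup.1 he
    obtain ⟨k, rfl⟩ := Subgroup.mem_zpowers_iff.1 (hg a)
    have hsplit : affinePerm (g ^ k) b = affinePerm 1 1 ^ (b.cast : ℤ) * affinePerm g 0 ^ k := by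
      rw [← affinePerm_one_zsmul, ← affinePerm_zpow_zero, affinePerm_mul]
      simp
    rw [hsplit]
    exact mul_mem (zpow_mem (Subgroup.subset_closure (by simp)) _)
      (zpow_mem (Subgroup.subset_closure (by simp)) _)

lemma eq_one_or_eq_affinePerm_neg_one_one_of_mapsTo [Nontrivial R] {e : Perm R}
    (he : e ∈ affineGroup R) (hmaps : Set.MapsTo e {0, 1} {0, 1}) :
    e = 1 ∨ e = affinePerm (-1) 1 := by
  obtain ⟨a, b, rfl⟩ := mem_affineGroup.1 he
  have h0 : b = 0 ∨ b = 1 := by simpa [affinePerm_apply] using hmaps (Set.mem_insert 0 _)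
  have h1 : a + b = 0 ∨ a + b = 1 := by
    simpa [affinePerm_apply] using hmaps (Set.mem_insert_of_mem 0 rfl)
  obtain rfl | rfl := h0
  · left
    have ha : a = 1 := by simpa using h1
    rw [ha, affinePerm_one_zero]
  · right
    have ha : a = -1 := Units.ext <| by simpa [add_eq_zero_iff_eq_neg] using h1
    rw [ha]

end AffineGroup

section Labelling

/-- The labelling of the letters other than `5` by `ℤ/5` which follows the cycle `h6`, starting
at `2`; it identifies `G6` with `GA(1, 5)`. The last entry of the vector in `invFun` is a dummy
value, at the excluded letter `5`. -/
def label : ZMod 5 ≃ {i : Fin 6 // i ≠ 5} where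
  toFun x := ⟨![2, 0, 4, 3, 1] x, (by decide : ∀ y : Fin 5, ![(2 : Fin 6), 0, 4, 3, 1] y ≠ 5) x⟩
  invFun i := ![1, 4, 0, 3, 2, 0] i
  left_inv := by decide
  right_inv := by decide

/-- The primitive root `2` modulo `5`, by which `τ6` multiplies the labels. -/
def twoUnit : (ZMod 5)ˣ := ⟨2, 3, by decide, by decide⟩

lemma mem_zpowers_twoUnit (u : (ZMod 5)ˣ) : u ∈ Subgroup.zpowers twoUnit := by
  have hpow : ∀ u : (ZMod 5)ˣ, ∃ k : Fin 4, twoUnit ^ (k : ℕ) = u := by decide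
  obtain ⟨k, rfl⟩ := hpow u
  exact Subgroup.npow_mem_zpowers _ _

lemma extendDomain_affinePerm_twoUnit_zero : (affinePerm twoUnit 0).extendDomain label = τ6 := by
  decide +kernel

lemma extendDomain_affinePerm_one_one : (affinePerm 1 1).extendDomain label = h6 := by
  decide +kernel

lemma extendDomain_affinePerm_neg_one_one :
    (affinePerm (-1) 1).extendDomain label = h6 * τ6 ^ 2 := by
  decide +kernel

lemma G6_eq_map_affineGroup : G6 = (affineGroup (ZMod 5)).map (extendDomainHom label) := by
  rw [← closure_affinePerm_eq_affineGroup mem_zpowers_twoUnit, MonoidHom.map_closure,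
    Set.image_pair, extendDomainHom_apply, extendDomainHom_apply,
    extendDomain_affinePerm_twoUnit_zero, extendDomain_affinePerm_one_one, G6]

lemma card_G6 : Nat.card G6 = 20 := by
  rw [G6_eq_map_affineGroup, Subgroup.card_map_of_injective (extendDomainHom_injective label),
    card_affineGroup]
  simp [ZMod.card_units_eq_totient, Nat.totient_prime Nat.prime_five]

lemma apply_five_of_mem_G6 {σ : Perm (Fin 6)} (hσ : σ ∈ G6) : σ 5 = 5 := by
  rw [G6_eq_map_affineGroup] at hσ
  obtain ⟨e, -, rfl⟩ := hσ
  exact extendDomain_apply_not_subtype e label (by simp)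

lemma eq_one_or_eq_h6_mul_τ6_sq_of_mapsTo {σ : Perm (Fin 6)} (hσ : σ ∈ G6)
    (hmaps : Set.MapsTo σ {0, 2} {0, 2}) : σ = 1 ∨ σ = h6 * τ6 ^ 2 := by
  rw [G6_eq_map_affineGroup] at hσ
  obtain ⟨e, he, rfl⟩ := hσ
  have : Nontrivial (ZMod 5) := ZMod.nontrivial_iff.2 (by decide)
  have hlabel : ∀ x, (label x : Fin 6) ∈ ({0, 2} : Set (Fin 6)) ↔ x ∈ ({0, 1} : Set (ZMod 5)) := by
    decide
  have hmaps' : Set.MapsTo e {0, 1} {0, 1} := fun x hx ↦ by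
    rw [← hlabel] at hx ⊢
    simpa only [extendDomainHom_apply, extendDomain_apply_image] using hmaps hx
  rw [← extendDomain_affinePerm_neg_one_one]
  exact (eq_one_or_eq_affinePerm_neg_one_one_of_mapsTo he hmaps').imp
    (by rintro rfl; exact map_one _) (by rintro rfl; rfl)

lemma orderOf_h6_mul_τ6_sq : orderOf (h6 * τ6 ^ 2) = 2 :=
  orderOf_eq_prime (by decide +kernel) (by decide +kernel)

end Labelling

section Stabilizer

attribute [local instance] arrowAction

variable {w : ℂ} {σ : Perm (Fin 6)}

lemma act_image_eq_smul (σ : Perm (Fin 6)) (S : Set (Fin 6 → ℂ)) : act σ '' S = σ • S := rfl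

lemma mem_Q1_of_isPrimitiveRoot {ζ : ℂ} (hζ : IsPrimitiveRoot ζ 3) :
    ![0, 1, 0, ζ, ζ ^ 2, 0] ∈ Q1 w := by
  have hsum : 1 + ζ + ζ ^ 2 = 0 := by
    simpa [Finset.sum_range_succ] using hζ.geom_sum_eq_zero (by norm_num)
  simp [Q1, hsum]

lemma mapsTo_pair_of_smul_Q1_eq (h5 : σ 5 = 5) (hσ : σ • Q1 w = Q1 w) :
    Set.MapsTo σ {0, 2} {0, 2} := by
  obtain ⟨ζ, hζ⟩ : ∃ ζ : ℂ, IsPrimitiveRoot ζ 3 :=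
    ⟨_, Complex.isPrimitiveRoot_exp 3 (by norm_num)⟩
  let p : Fin 6 → ℂ := ![0, 1, 0, ζ, ζ ^ 2, 0]
  have hcube : ∀ j, p j ^ 3 = if j ∈ ({1, 3, 4} : Finset (Fin 6)) then 1 else 0 := by
    have hζ3 : ζ ^ 3 = 1 := hζ.pow_eq_one
    intro j
    fin_cases j <;> simp [p, hζ3, pow_right_comm ζ 2 3]
  have hsum : p (σ 0) + p (σ 2) = 0 := by
    have hmem : σ⁻¹ • p ∈ Q1 w := by
      rw [← Set.mem_smul_set_iff_inv_smul_mem, hσ]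
      exact mem_Q1_of_isPrimitiveRoot hζ
    have hℓ₁ : p (σ 0) + p (σ 2) + p (σ 5) = 0 := hmem.1
    simpa [h5, p] using hℓ₁
  have hcubes : p (σ 0) ^ 3 + p (σ 2) ^ 3 = 0 := by
    rw [eq_neg_of_add_eq_zero_left hsum]
    ring
  have hnotMem : σ 0 ∉ ({1, 3, 4} : Finset (Fin 6)) ∧ σ 2 ∉ ({1, 3, 4} : Finset (Fin 6)) := by
    rw [hcube, hcube] at hcubes
    split_ifs at hcubes <;> simp_all
  have hpair : ∀ i, i ≠ 5 → i ∉ ({1, 3, 4} : Finset (Fin 6)) → i ∈ ({0, 2} : Set (Fin 6)) := by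
    decide
  have hne5 : ∀ i, i ≠ 5 → σ i ≠ 5 := fun i hi h ↦ hi (σ.injective (h.trans h5.symm))
  rintro _ (rfl | rfl)
  · exact hpair _ (hne5 0 (by decide)) hnotMem.1
  · exact hpair _ (hne5 2 (by decide)) hnotMem.2

lemma h6_mul_τ6_sq_smul_Q1 (w : ℂ) : (h6 * τ6 ^ 2) • Q1 w = Q1 w := by
  refine smul_set_eq_of_mul_self_eq_one (by decide +kernel) fun p hp ↦ ?_
  obtain ⟨hℓ₁, hℓ₂, hq₁⟩ := hp
  have hperm : (h6 * τ6 ^ 2) • p = ![p 2, p 4, p 0, p 3, p 1, p 5] := by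
    have hinv : ⇑(h6 * τ6 ^ 2)⁻¹ = ![2, 4, 0, 3, 1, 5] := by decide +kernel
    ext j
    change p ((h6 * τ6 ^ 2)⁻¹ j) = _
    rw [hinv]
    fin_cases j <;> rfl
  rw [hperm]
  refine ⟨?_, ?_, ?_⟩ <;> simp only [Matrix.cons_val]
  · linear_combination hℓ₁
  · linear_combination hℓ₂
  · linear_combination hq₁ + w * (p 4 - p 1) * hℓ₂

lemma setOf_mem_G6_and_smul_Q1_eq (w : ℂ) :
    {σ : Perm (Fin 6) | σ ∈ G6 ∧ σ • Q1 w = Q1 w} = {1, h6 * τ6 ^ 2} := by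
  ext σ
  constructor
  · rintro ⟨hG, hQ⟩
    exact eq_one_or_eq_h6_mul_τ6_sq_of_mapsTo hG
      (mapsTo_pair_of_smul_Q1_eq (apply_five_of_mem_G6 hG) hQ)
  · rintro (rfl | rfl)
    · exact ⟨one_mem _, one_smul _ _⟩
    · exact ⟨mul_mem (Subgroup.subset_closure (by simp))
        (pow_mem (Subgroup.subset_closure (by simp)) 2), h6_mul_τ6_sq_smul_Q1 w⟩

lemma ncard_orbit_G6_Q1 (w : ℂ) : (MulAction.orbit G6 (Q1 w)).ncard = 10 := by
  have hne : (1 : Perm (Fin 6)) ≠ h6 * τ6 ^ 2 := by decide +kernel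
  have hcard := ncard_orbit_mul_ncard_stabilizer G6 (Q1 w)
  rw [setOf_mem_G6_and_smul_Q1_eq, Set.ncard_pair hne, card_G6] at hcard
  lia

theorem orbit_of_Q1_has_ten_elements_general (w : ℂ) :
    ({S : Set (Fin 6 → ℂ) | ∃ σ ∈ G6, S = act σ '' Q1 w}).ncard = 10 ∧
    {σ : Equiv.Perm (Fin 6) | σ ∈ G6 ∧ act σ '' Q1 w = Q1 w} = {1, h6 * τ6 ^ 2} ∧
    orderOf (h6 * τ6 ^ 2) = 2 := by
  simp only [act_image_eq_smul]
  refine ⟨?_, setOf_mem_G6_and_smul_Q1_eq w, orderOf_h6_mul_τ6_sq⟩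
  have horbit : {S | ∃ σ ∈ G6, S = σ • Q1 w} = MulAction.orbit G6 (Q1 w) := by
    ext S
    simp [MulAction.mem_orbit_iff, Subgroup.smul_def, eq_comm]
  rw [horbit, ncard_orbit_G6_Q1]

end Stabilizer

/-- The orbit of the quadric cone Q₁ under G consists of exactly 10 distinct
subsets of ℂ⁶; equivalently, the stabilizer of Q₁ in G is the order-2 subgroup
generated by the involution h∘τ². -/
theorem orbit_of_Q1_has_ten_elements (w : ℂ) (hw : w ^ 2 + w + 1 = 0) :
    ({S : Set (Fin 6 → ℂ) | ∃ σ ∈ G6, S = act σ '' Q1 w}).ncard = 10 ∧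
    {σ : Equiv.Perm (Fin 6) | σ ∈ G6 ∧ act σ '' Q1 w = Q1 w} = {1, h6 * τ6 ^ 2} ∧
    orderOf (h6 * τ6 ^ 2) = 2 :=
  orbit_of_Q1_has_ten_elements_general w
end
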